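/- For each n ≥ 1 let G_n be a random simple graph on vertex set {1,…,n}, and let ν_n be the distribution of the graphon W_{G_n}, regarded as a Borel probability measure on the space of graphons equipped with the topology induced by the pseudometric δ_□. Suppose ν_n converges weakly to a Borel probability measure μ on this space. Then limsup_{n→∞} H(G_n)/C(n,2) ≤ sup_{W ∈ supp(μ)} Ent(W), where supp(μ) is the topological support of μ and C(n,2) = n(n-1)/2. -/

import Mathlib

open MeasureTheory Set Filter

noncomputable section

/-- A graphon: a symmetric measurable function `ℝ → ℝ → ℝ` with values in `[0,1]`
(only its values on `[0,1]²` matter). -/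
def IsGraphon (W : ℝ → ℝ → ℝ) : Prop :=
  (∀ x y, W x y = W y x) ∧ Measurable (Function.uncurry W) ∧
    ∀ x y, W x y ∈ Set.Icc (0 : ℝ) 1

/-- The cut norm `‖U‖_□`, the supremum over measurable `S, T ⊆ [0,1]` of
`|∫_{S×T} U|`. -/
def cutNorm (U : ℝ → ℝ → ℝ) : ℝ :=
  sSup { r : ℝ | ∃ S T : Set ℝ, MeasurableSet S ∧ MeasurableSet T ∧
    S ⊆ Set.Icc 0 1 ∧ T ⊆ Set.Icc 0 1 ∧
    r = |∫ p in S ×ˢ T, U p.1 p.2| }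

/-- `d_□(W₁, W₂) = ‖W₁ - W₂‖_□`. -/
def dCut (W₁ W₂ : ℝ → ℝ → ℝ) : ℝ := cutNorm (fun x y => W₁ x y - W₂ x y)

/-- A Lebesgue-measure-preserving map `[0,1] → [0,1]`. -/
def IsMPSelf (σ : ℝ → ℝ) : Prop :=
  MeasureTheory.MeasurePreserving σ
      (MeasureTheory.volume.restrict (Set.Icc (0:ℝ) 1))
      (MeasureTheory.volume.restrict (Set.Icc (0:ℝ) 1)) ∧
    Set.MapsTo σ (Set.Icc (0:ℝ) 1) (Set.Icc (0:ℝ) 1)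

/-- The cut distance `δ_□(W₁, W₂)`. -/
def deltaCut (W₁ W₂ : ℝ → ℝ → ℝ) : ℝ :=
  sInf { r : ℝ | ∃ σ₁ σ₂ : ℝ → ℝ, IsMPSelf σ₁ ∧ IsMPSelf σ₂ ∧
    r = cutNorm (fun x y => W₁ (σ₁ x) (σ₁ y) - W₂ (σ₂ x) (σ₂ y)) }

/-- The binary entropy function `h` (base-2 logarithm; `logb 2 0 = 0` by convention,
so `h 0 = h 1 = 0`). -/
def binEnt (x : ℝ) : ℝ := -x * Real.logb 2 x - (1 - x) * Real.logb 2 (1 - x)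

/-- `h̃ x = h (min x (1/2))`. -/
def htilde (x : ℝ) : ℝ := binEnt (min x (1/2))

/-- The entropy `Ent(W) = ∫₀¹∫₀¹ h(W(x,y)) dx dy` of a graphon. -/
def graphonEnt (W : ℝ → ℝ → ℝ) : ℝ :=
  ∫ x in Set.Icc (0:ℝ) 1, ∫ y in Set.Icc (0:ℝ) 1, binEnt (W x y)

open Classical in
/-- The graphon `W_G` of a simple graph `G` on `{1, …, n}` (vertices as `Fin n`,
vertex `i : Fin n` representing `i+1`): `W_G x y = 1` iff `⌈nx⌉⌈ny⌉ ∈ E(G)`. -/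
def graphonOfGraph {n : ℕ} (G : SimpleGraph (Fin n)) : ℝ → ℝ → ℝ := fun x y =>
  if ∃ i j : Fin n, G.Adj i j ∧ ⌈(n : ℝ) * x⌉ = ((i : ℕ) : ℤ) + 1 ∧
      ⌈(n : ℝ) * y⌉ = ((j : ℕ) : ℤ) + 1
  then 1 else 0

/-- A labelled graph class: a set of graphs on `{1,…,n}` for each `n`. -/
abbrev GraphClass := ∀ n : ℕ, Set (SimpleGraph (Fin n))

/-- A graph class is closed under relabelling by permutations. -/
def IsGraphClass (Q : GraphClass) : Prop :=
  ∀ (n : ℕ) (π : Equiv.Perm (Fin n)) (G : SimpleGraph (Fin n)),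
    G ∈ Q n → G.comap ⇑π ∈ Q n

/-- A hereditary graph class: a graph class closed under taking induced subgraphs
(relabelled by the order-preserving bijection). -/
def IsHereditary (Q : GraphClass) : Prop :=
  IsGraphClass Q ∧
    ∀ (m n : ℕ) (f : Fin m → Fin n), StrictMono f →
      ∀ G ∈ Q n, G.comap f ∈ Q m

/-- `Q̂`: the set of graphons which are limits (in cut distance) of sequences of graphs in
the class `Q` whose orders tend to infinity. -/
def limitSet (Q : GraphClass) : Set (ℝ → ℝ → ℝ) :=
  { W | IsGraphon W ∧
    ∃ (nk : ℕ → ℕ) (Gk : ∀ k, SimpleGraph (Fin (nk k))),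
      (∀ k, Gk k ∈ Q (nk k)) ∧ Filter.Tendsto nk Filter.atTop Filter.atTop ∧
      Filter.Tendsto (fun k => deltaCut (graphonOfGraph (Gk k)) W) Filter.atTop (nhds 0) }

/-- `C(n,2) = n(n-1)/2` as a real number. -/
def choose2 (n : ℕ) : ℝ := (n : ℝ) * ((n : ℝ) - 1) / 2

open Classical in
/-- The step function `E[W | P]` obtained by averaging `W` over the products of the
parts of the partition `P` of `[0,1]`. -/
def condExpPart {k : ℕ} (P : Fin k → Set ℝ) (W : ℝ → ℝ → ℝ) : ℝ → ℝ → ℝ := fun x y =>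
  ∑ i : Fin k, ∑ j : Fin k,
    if x ∈ P i ∧ y ∈ P j then ⨍ p in (P i) ×ˢ (P j), W p.1 p.2 else 0

/-- `W̄_n`: the step function of `W` for the partition of `[0,1]` into `n` consecutive
intervals of length `1/n`. -/
def barStep (n : ℕ) (W : ℝ → ℝ → ℝ) : ℝ → ℝ → ℝ :=
  condExpPart (fun i : Fin n => Set.Ioc (((i : ℕ) : ℝ)/n) ((((i : ℕ) : ℝ) + 1)/n)) W

/-- `N̂_□(n, δ; W)`: the number of graphs `G` on `{1,…,n}` with `d_□(W_G, W) ≤ δ`. -/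
def NhatCut (n : ℕ) (δ : ℝ) (W : ℝ → ℝ → ℝ) : ℕ :=
  Nat.card {G : SimpleGraph (Fin n) // dCut (graphonOfGraph G) W ≤ δ}

/-- `N_□(n, δ; W)`: the number of graphs `G` on `{1,…,n}` with `δ_□(W_G, W) ≤ δ`. -/
def NCut (n : ℕ) (δ : ℝ) (W : ℝ → ℝ → ℝ) : ℕ :=
  Nat.card {G : SimpleGraph (Fin n) // deltaCut (graphonOfGraph G) W ≤ δ}

open Classical in
/-- The induced density `p(F; W)` of a graph `F` on `{1,…,k}` in a graphon `W`. -/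
def inducedDensity {k : ℕ} (F : SimpleGraph (Fin k)) (W : ℝ → ℝ → ℝ) : ℝ :=
  ∫ x : Fin k → ℝ in Set.univ.pi (fun _ : Fin k => Set.Icc (0:ℝ) 1),
    ∏ i : Fin k, ∏ j : Fin k,
      if i < j then (if F.Adj i j then W (x i) (x j) else 1 - W (x i) (x j)) else 1

open Classical in
/-- The randomness support graphon `1_{rand(W)}` of `W`. -/
def randIndicator (W : ℝ → ℝ → ℝ) : ℝ → ℝ → ℝ := fun x y =>
  if 0 < W x y ∧ W x y < 1 then 1 else 0

/-- A kernel `U` is `K_r`-free if `∏_{i<j} U(x_i, x_j) = 0` for a.e. `x ∈ [0,1]^r`. -/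
def KFree (r : ℕ) (U : ℝ → ℝ → ℝ) : Prop :=
  ∀ᵐ x ∂(MeasureTheory.volume.restrict (Set.univ.pi fun _ : Fin r => Set.Icc (0:ℝ) 1)),
    (∏ i : Fin r, ∏ j : Fin r, if i < j then U (x i) (x j) else 1) = 0

open Classical in
/-- The graphon `W^{(r,s)}`: equal to `1/2` off the diagonal blocks, `1` on the first `s`
diagonal blocks `I_i × I_i`, and `0` on the remaining diagonal blocks. -/
def Wrs (r s : ℕ) : ℝ → ℝ → ℝ := fun x y =>
  if ∃ i j : Fin r, i ≠ j ∧ x ∈ Set.Ioc (((i:ℕ):ℝ)/r) ((((i:ℕ):ℝ)+1)/r) ∧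
      y ∈ Set.Ioc (((j:ℕ):ℝ)/r) ((((j:ℕ):ℝ)+1)/r)
  then 1/2
  else if ∃ i : Fin r, (i:ℕ) < s ∧ x ∈ Set.Ioc (((i:ℕ):ℝ)/r) ((((i:ℕ):ℝ)+1)/r) ∧
      y ∈ Set.Ioc (((i:ℕ):ℝ)/r) ((((i:ℕ):ℝ)+1)/r)
  then 1 else 0

/-- `E_r = ⋃_{i ≠ j} I_i × I_j` where `I_i`, `i = 1, …, r`, are the consecutive
intervals of length `1/r` in `[0,1]`. -/
def Er (r : ℕ) : Set (ℝ × ℝ) :=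
  ⋃ (i : Fin r) (j : Fin r) (_ : i ≠ j),
    (Set.Ioc (((i:ℕ):ℝ)/r) ((((i:ℕ):ℝ)+1)/r)) ×ˢ (Set.Ioc (((j:ℕ):ℝ)/r) ((((j:ℕ):ℝ)+1)/r))

/-- `R_r`: the set of graphons equal to `1/2` on `E_r` and `{0,1}`-valued elsewhere
on `[0,1]²`. -/
def Rset (r : ℕ) : Set (ℝ → ℝ → ℝ) :=
  { W | IsGraphon W ∧ (∀ p ∈ Er r, W p.1 p.2 = 1/2) ∧
      ∀ p ∈ ((Set.Icc (0:ℝ) 1) ×ˢ (Set.Icc (0:ℝ) 1)) \ Er r,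
        W p.1 p.2 = 0 ∨ W p.1 p.2 = 1 }

/-- A graphon is random-free if it is `{0,1}`-valued a.e. on `[0,1]²`. -/
def IsRandomFree (W : ℝ → ℝ → ℝ) : Prop :=
  ∀ᵐ p ∂(MeasureTheory.volume.restrict ((Set.Icc (0:ℝ) 1) ×ˢ (Set.Icc (0:ℝ) 1))),
    W (Prod.fst p) (Prod.snd p) = 0 ∨ W (Prod.fst p) (Prod.snd p) = 1


lemma isGraphon_graphonOfGraph {n : ℕ} (G : SimpleGraph (Fin n)) :
    IsGraphon (graphonOfGraph G) := by
  classical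
  refine ⟨fun x y => ?_, ?_, fun x y => ?_⟩
  · have h : (∃ i j : Fin n, G.Adj i j ∧ ⌈(n : ℝ) * x⌉ = ((i : ℕ) : ℤ) + 1 ∧
        ⌈(n : ℝ) * y⌉ = ((j : ℕ) : ℤ) + 1) ↔
        (∃ i j : Fin n, G.Adj i j ∧ ⌈(n : ℝ) * y⌉ = ((i : ℕ) : ℤ) + 1 ∧
        ⌈(n : ℝ) * x⌉ = ((j : ℕ) : ℤ) + 1) := by
      constructor <;> rintro ⟨i, j, hadj, h1, h2⟩ <;> exact ⟨j, i, hadj.symm, h2, h1⟩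
    simp only [graphonOfGraph]
    exact if_congr h rfl rfl
  · have hset : ∀ i j : Fin n,
        MeasurableSet {p : ℝ × ℝ | ⌈(n : ℝ) * p.1⌉ = ((i : ℕ) : ℤ) + 1 ∧
          ⌈(n : ℝ) * p.2⌉ = ((j : ℕ) : ℤ) + 1} := by
      intro i j
      have h1 : {p : ℝ × ℝ | ⌈(n : ℝ) * p.1⌉ = ((i : ℕ) : ℤ) + 1 ∧
          ⌈(n : ℝ) * p.2⌉ = ((j : ℕ) : ℤ) + 1} =
          ((fun x : ℝ => (n : ℝ) * x) ⁻¹' Set.Ioc ((((i:ℕ):ℤ):ℝ) + 1 - 1) ((((i:ℕ):ℤ):ℝ) + 1)) ×ˢ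
          ((fun y : ℝ => (n : ℝ) * y) ⁻¹' Set.Ioc ((((j:ℕ):ℤ):ℝ) + 1 - 1) ((((j:ℕ):ℤ):ℝ) + 1)) := by
        ext p
        simp only [Set.mem_setOf_eq, Set.mem_prod, Set.mem_preimage, Set.mem_Ioc,
          Int.ceil_eq_iff]
        push_cast
        tauto
      rw [h1]
      exact ((measurable_id.const_mul _) measurableSet_Ioc).prod
        ((measurable_id.const_mul _) measurableSet_Ioc)
    have heq : Function.uncurry (graphonOfGraph G) = Set.indicator
        (⋃ (i : Fin n) (j : Fin n) (_ : G.Adj i j),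
          {p : ℝ × ℝ | ⌈(n : ℝ) * p.1⌉ = ((i : ℕ) : ℤ) + 1 ∧
            ⌈(n : ℝ) * p.2⌉ = ((j : ℕ) : ℤ) + 1}) (fun _ => (1:ℝ)) := by
      funext p
      rw [Set.indicator_apply]
      simp only [Function.uncurry, graphonOfGraph]
      refine if_congr ?_ rfl rfl
      simp only [Set.mem_iUnion, Set.mem_setOf_eq]
      tauto
    rw [heq]
    exact Measurable.indicator measurable_const
      (MeasurableSet.iUnion fun i => MeasurableSet.iUnion fun j =>
        MeasurableSet.iUnion fun _ => hset i j)
  · unfold graphonOfGraph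
    split_ifs <;> norm_num


/-- The space of graphons. -/
def Graphon : Type := {W : ℝ → ℝ → ℝ // IsGraphon W}

/-- The topology on the space of graphons induced by the pseudometric `δ_□`
(generated by the open balls). -/
instance : TopologicalSpace Graphon :=
  TopologicalSpace.generateFrom
    { s | ∃ (W₀ : Graphon) (ε : ℝ), 0 < ε ∧ s = { W : Graphon | deltaCut W.1 W₀.1 < ε } }

/-- The Borel σ-algebra on the space of graphons. -/
instance : MeasurableSpace Graphon := borel Graphon

instance (n : ℕ) : MeasurableSpace (SimpleGraph (Fin n)) := ⊤

/-- The graphon `W_G` of `G`, as an element of the space of graphons. -/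
def graphonMap {n : ℕ} (G : SimpleGraph (Fin n)) : Graphon :=
  ⟨graphonOfGraph G, isGraphon_graphonOfGraph G⟩

/-- The entropy `H(G_n)` of a random graph on `{1,…,n}` with distribution `μ`. -/
def graphEntropy {n : ℕ} (μ : Measure (SimpleGraph (Fin n))) : ℝ :=
  ∑ G : SimpleGraph (Fin n), -((μ {G}).toReal * Real.logb 2 (μ {G}).toReal)

/-- The topological support of a measure on the space of graphons. -/
def measSupport (μ : Measure Graphon) : Set Graphon :=
  { W | ∀ s : Set Graphon, IsOpen s → W ∈ s → 0 < μ s }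

/-- Cross entropy of a Bernoulli(`v`) source coded with parameter `u`. -/
def ell (u v : ℝ) : ℝ := -(v * Real.logb 2 u + (1 - v) * Real.logb 2 (1 - u))

/-- The grid of parameters. -/
def uval (m : ℕ) (a : Fin (2 * m + 1)) : ℝ := ((a : ℕ) + 1) / (2 * m + 2)

lemma uval_pos (m : ℕ) (a : Fin (2 * m + 1)) : 0 < uval m a := by
  unfold uval; positivity

lemma uval_lt_one (m : ℕ) (a : Fin (2 * m + 1)) : uval m a < 1 := by
  unfold uval
  rw [div_lt_one (by positivity)]
  have : ((a : ℕ) : ℝ) + 1 ≤ 2 * m + 1 := by exact_mod_cast a.2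
  linarith

lemma ell_nonneg {u v : ℝ} (hu : 0 < u) (hu1 : u < 1) (hv : v ∈ Icc (0:ℝ) 1) : 0 ≤ ell u v := by
  unfold ell
  have h1 : Real.logb 2 u ≤ 0 := Real.logb_nonpos (by norm_num) hu.le hu1.le
  have h2 : Real.logb 2 (1 - u) ≤ 0 := Real.logb_nonpos (by norm_num) (by linarith) (by linarith)
  have := mul_nonpos_of_nonneg_of_nonpos hv.1 h1
  have := mul_nonpos_of_nonneg_of_nonpos (sub_nonneg.2 hv.2) h2
  linarith

lemma gibbs {Γ : Type*} [Fintype Γ] (p : Γ → ℝ) (hp : ∀ g, 0 ≤ p g) (hp1 : ∑ g, p g = 1)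
    (L : Γ → ℝ) (hL : ∑ g, (2:ℝ) ^ (-L g) ≤ 1) :
    ∑ g, -(p g * Real.logb 2 (p g)) ≤ ∑ g, p g * L g := by
  have hl : 0 < Real.log 2 := Real.log_pos (by norm_num)
  have key : ∀ g, -(p g * Real.logb 2 (p g)) ≤ p g * L g + ((2:ℝ) ^ (-L g) - p g) / Real.log 2 := by
    intro g
    rcases (hp g).eq_or_lt with h | h
    · rw [← h]; simp; positivity
    · have h2 : (0:ℝ) < (2:ℝ) ^ (-L g) := by positivity
      have := Real.log_le_sub_one_of_pos (div_pos h2 h)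
      rw [Real.log_div h2.ne' h.ne', Real.log_rpow (by norm_num)] at this
      rw [Real.logb]
      have h3 := mul_le_mul_of_nonneg_left this h.le
      have e : p g * ((2:ℝ) ^ (-L g) / p g - 1) = (2:ℝ) ^ (-L g) - p g := by field_simp
      rw [e] at h3
      have h4 := div_le_div_of_nonneg_right h3 hl.le
      have e2 : p g * (-L g * Real.log 2 - Real.log (p g)) / Real.log 2 =
        - (p g * L g) - p g * (Real.log (p g) / Real.log 2) := by field_simp
      linarith
  calc _ ≤ ∑ g, (p g * L g + ((2:ℝ) ^ (-L g) - p g) / Real.log 2) := Finset.sum_le_sum fun g _ => key g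
    _ = ∑ g, p g * L g + (∑ g, (2:ℝ) ^ (-L g) - ∑ g, p g) / Real.log 2 := by
      rw [Finset.sum_add_distrib, ← Finset.sum_div, Finset.sum_sub_distrib]
    _ ≤ _ := by
      rw [hp1]
      have : (∑ g, (2:ℝ) ^ (-L g) - 1) / Real.log 2 ≤ 0 :=
        div_nonpos_of_nonpos_of_nonneg (by linarith) hl.le
      linarith

lemma gibbs_code {Γ I : Type*} [Fintype Γ] [Fintype I] [Nonempty I] (p : Γ → ℝ)
    (hp : ∀ g, 0 ≤ p g) (hp1 : ∑ g, p g = 1)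
    (cost : I → Γ → ℝ) (hc : ∀ i, ∑ g, (2:ℝ) ^ (-cost i g) ≤ 1) (sel : Γ → I) :
    ∑ g, -(p g * Real.logb 2 (p g)) ≤
      Real.logb 2 (Fintype.card I) + ∑ g, p g * cost (sel g) g := by
  have hcard : (0:ℝ) < Fintype.card I := by exact_mod_cast Fintype.card_pos
  have := gibbs p hp hp1 (fun g => Real.logb 2 (Fintype.card I) + cost (sel g) g) (by
    have e : ∀ g, (2:ℝ) ^ (-(Real.logb 2 (Fintype.card I) + cost (sel g) g)) =
        (2:ℝ) ^ (-cost (sel g) g) / Fintype.card I := by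
      intro g
      rw [neg_add, Real.rpow_add (by norm_num), Real.rpow_neg (by norm_num),
        Real.rpow_logb (by norm_num) (by norm_num) hcard]
      ring
    simp_rw [e]
    rw [← Finset.sum_div, div_le_one hcard]
    calc ∑ g, (2:ℝ) ^ (-cost (sel g) g) ≤ ∑ g, ∑ i, (2:ℝ) ^ (-cost i g) := by
          apply Finset.sum_le_sum; intro g _
          exact Finset.single_le_sum (f := fun i => (2:ℝ) ^ (-cost i g))
            (fun i _ => by positivity) (Finset.mem_univ (sel g))
      _ = ∑ i, ∑ g, (2:ℝ) ^ (-cost i g) := Finset.sum_comm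
      _ ≤ ∑ i : I, 1 := Finset.sum_le_sum fun i _ => hc i
      _ = _ := by simp)
  refine this.trans (le_of_eq ?_)
  simp_rw [mul_add, Finset.sum_add_distrib, ← Finset.sum_mul, hp1, one_mul]

open Classical in
/-- adjacency as a real number -/
def adjR {n : ℕ} (G : SimpleGraph (Fin n)) (v w : Fin n) : ℝ := if G.Adj v w then 1 else 0

lemma adjR_symm {n : ℕ} (G : SimpleGraph (Fin n)) (v w : Fin n) : adjR G v w = adjR G w v := by
  have := G.adj_comm v w
  unfold adjR
  by_cases h : G.Adj v w
  · simp [h, this.1 h]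
  · simp [h, mt this.2 h]

lemma adjR_mem {n : ℕ} (G : SimpleGraph (Fin n)) (v w : Fin n) : adjR G v w ∈ Icc (0:ℝ) 1 := by
  unfold adjR; split_ifs <;> simp

lemma kraft {n : ℕ} (q : Fin n → Fin n → ℝ) (h0 : ∀ v w, 0 < q v w) (h1 : ∀ v w, q v w < 1) :
    ∑ G : SimpleGraph (Fin n), (2:ℝ) ^ (-(∑ v, ∑ w, if v < w then ell (q v w) (adjR G v w) else 0))
      ≤ 1 := by
  classical
  set P : Finset (Fin n × Fin n) := Finset.univ.filter (fun e => e.1 < e.2) with hP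
  let T : SimpleGraph (Fin n) → Finset (Fin n × Fin n) := fun G => P.filter (fun e => G.Adj e.1 e.2)
  have hT : Function.Injective T := by
    intro G G' h
    have key : ∀ v w, v < w → (G.Adj v w ↔ G'.Adj v w) := by
      intro v w hvw
      have := Finset.ext_iff.1 h (v, w)
      simpa [T, hP, hvw] using this
    ext v w
    rcases lt_trichotomy v w with h | h | h
    · exact key v w h
    · subst h; simp
    · rw [G.adj_comm, G'.adj_comm]; exact key w v h
  have e : ∀ G : SimpleGraph (Fin n),
      (2:ℝ) ^ (-(∑ v, ∑ w, if v < w then ell (q v w) (adjR G v w) else 0)) =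
      (∏ e ∈ T G, q e.1 e.2) * ∏ e ∈ P \ T G, (1 - q e.1 e.2) := by
    intro G
    have : (∑ v, ∑ w, if v < w then ell (q v w) (adjR G v w) else 0)
        = ∑ e ∈ P, ell (q e.1 e.2) (adjR G e.1 e.2) := by
      rw [hP, Finset.sum_filter, ← Finset.univ_product_univ, Finset.sum_product]
    rw [this, ← Finset.sum_neg_distrib, Real.rpow_sum_of_pos (by norm_num),
      ← Finset.prod_sdiff (Finset.filter_subset (fun e : Fin n × Fin n => G.Adj e.1 e.2) P), mul_comm]
    congr 1
    · apply Finset.prod_congr rfl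
      intro e he
      have : G.Adj e.1 e.2 := (Finset.mem_filter.1 he).2
      simp [ell, adjR, this]
      exact Real.rpow_logb (by norm_num) (by norm_num) (h0 _ _)
    · apply Finset.prod_congr rfl
      intro e he
      have : ¬ G.Adj e.1 e.2 := by
        intro h
        rw [Finset.mem_sdiff] at he
        exact he.2 (Finset.mem_filter.2 ⟨he.1, h⟩)
      simp [ell, adjR, this]
      exact Real.rpow_logb (by norm_num) (by norm_num) (by linarith [h1 e.1 e.2])
  simp_rw [e]
  have := Finset.prod_add (fun e : Fin n × Fin n => q e.1 e.2) (fun e => 1 - q e.1 e.2) P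
  simp only [add_sub_cancel, Finset.prod_const_one] at this
  refine le_of_le_of_eq ?_ this.symm
  rw [← Finset.sum_image (f := fun t => (∏ e ∈ t, q e.1 e.2) * ∏ e ∈ P \ t, (1 - q e.1 e.2))
    (s := Finset.univ) (g := T) (fun a _ b _ h => hT h)]
  apply Finset.sum_le_sum_of_subset_of_nonneg
  · intro t ht
    obtain ⟨G, _, rfl⟩ := Finset.mem_image.1 ht
    exact Finset.mem_powerset.2 (Finset.filter_subset _ _)
  · intro t _ _
    exact mul_nonneg (Finset.prod_nonneg fun e _ => (h0 _ _).le)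
      (Finset.prod_nonneg fun e _ => by linarith [h1 e.1 e.2])

/-- Expectation of a two-point function under independent choices. -/
lemma expect_pair {n k : ℕ} (b : Fin n → Fin k → ℝ) (hb : ∀ v, ∑ j, b v j = 1)
    (φ : Fin k → Fin k → ℝ) {v w : Fin n} (hvw : v ≠ w) :
    ∑ c : Fin n → Fin k, (∏ x, b x (c x)) * φ (c v) (c w) =
      ∑ j, ∑ j', b v j * b w j' * φ j j' := by
  classical
  have key : ∀ j j', ∑ c : Fin n → Fin k, (∏ x, b x (c x)) *
      ((if c v = j then 1 else 0) * (if c w = j' then 1 else 0)) = b v j * b w j' := by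
    intro j j'
    let t : Fin n → Fin k → ℝ := fun x i =>
      b x i * ((if x = v then (if i = j then 1 else 0) else 1) *
        (if x = w then (if i = j' then 1 else 0) else 1))
    have h1 : ∀ c : Fin n → Fin k, (∏ x, b x (c x)) *
        ((if c v = j then 1 else 0) * (if c w = j' then 1 else 0)) = ∏ x, t x (c x) := by
      intro c
      simp only [t, Finset.prod_mul_distrib]
      congr 2 <;> simp [Finset.prod_ite_eq']
    simp_rw [h1]
    have h2 := Finset.prod_univ_sum (fun _ : Fin n => (Finset.univ : Finset (Fin k))) t
    rw [Fintype.piFinset_univ] at h2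
    rw [← h2]
    have h3 : ∀ x, ∑ i, t x i = (if x = v then b v j else 1) * (if x = w then b w j' else 1) := by
      intro x
      by_cases hxv : x = v
      · subst hxv; simp [t, hvw]
      · by_cases hxw : x = w
        · subst hxw; simp [t, hxv]
        · simp [t, hxv, hxw, hb]
    simp_rw [h3, Finset.prod_mul_distrib]
    simp
  have h4 : ∀ c : Fin n → Fin k, φ (c v) (c w) = ∑ j, ∑ j', φ j j' *
      ((if c v = j then 1 else 0) * (if c w = j' then 1 else 0)) := by
    intro c; simp
  simp_rw [h4, Finset.mul_sum]
  rw [Finset.sum_comm]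
  refine Finset.sum_congr rfl fun j _ => ?_
  rw [Finset.sum_comm]
  refine Finset.sum_congr rfl fun j' _ => ?_
  rw [← key j j', Finset.sum_mul]
  exact Finset.sum_congr rfl fun c _ => by ring

lemma exists_assign {n k : ℕ} (b : Fin n → Fin k → ℝ) (hb0 : ∀ v j, 0 ≤ b v j)
    (hb : ∀ v, ∑ j, b v j = 1) (φ : Fin n → Fin n → Fin k → Fin k → ℝ) :
    ∃ c : Fin n → Fin k, (∑ v, ∑ w, if v ≠ w then φ v w (c v) (c w) else 0) ≤
      ∑ v, ∑ w, if v ≠ w then ∑ j, ∑ j', b v j * b w j' * φ v w j j' else 0 := by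
  classical
  by_contra! hcon
  have hsum : ∑ c : Fin n → Fin k, ∏ x, b x (c x) = 1 := by
    have h2 := Finset.prod_univ_sum (fun _ : Fin n => (Finset.univ : Finset (Fin k))) b
    rw [Fintype.piFinset_univ] at h2
    rw [← h2]; simp [hb]
  set R := ∑ v, ∑ w, if v ≠ w then ∑ j, ∑ j', b v j * b w j' * φ v w j j' else 0 with hR
  have e : ∑ c : Fin n → Fin k, (∏ x, b x (c x)) *
      (∑ v, ∑ w, if v ≠ w then φ v w (c v) (c w) else 0) = R := by
    simp_rw [Finset.mul_sum]
    rw [Finset.sum_comm]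
    refine Finset.sum_congr rfl fun v _ => ?_
    rw [Finset.sum_comm]
    refine Finset.sum_congr rfl fun w _ => ?_
    split_ifs with h
    · exact expect_pair b hb (φ v w) h
    · simp
  have hpos : ∃ c : Fin n → Fin k, 0 < ∏ x, b x (c x) := by
    by_contra! h
    have : ∑ c : Fin n → Fin k, ∏ x, b x (c x) ≤ 0 := Finset.sum_nonpos fun c _ => h c
    linarith
  obtain ⟨c0, hc0⟩ := hpos
  have : ∑ c : Fin n → Fin k, (∏ x, b x (c x)) * R < R := by
    conv_rhs => rw [← e]
    apply Finset.sum_lt_sum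
    · intro c _
      exact mul_le_mul_of_nonneg_left (hcon c).le (Finset.prod_nonneg fun x _ => hb0 _ _)
    · exact ⟨c0, Finset.mem_univ _, mul_lt_mul_of_pos_left (hcon c0) hc0⟩
  rw [← Finset.sum_mul, hsum, one_mul] at this
  exact lt_irrefl _ this

/-- Lebesgue measure on `[0,1]`. -/
abbrev lam : Measure ℝ := volume.restrict (Icc (0:ℝ) 1)

instance : IsProbabilityMeasure lam := ⟨by simp⟩

lemma le_lam {k : ℕ} {ν : Fin k → Measure ℝ} (hν : ∑ j, ν j = lam) (j : Fin k) : ν j ≤ lam := by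
  rw [← hν, Measure.le_iff]
  intro s _
  rw [Measure.finsetSum_apply]
  exact Finset.single_le_sum (f := fun j => ν j s) (fun _ _ => zero_le) (Finset.mem_univ j)

lemma integrable_bdd {μ : Measure (ℝ × ℝ)} [IsFiniteMeasure μ] {f : ℝ × ℝ → ℝ} (hf : Measurable f)
    {C : ℝ} (h : ∀ p, |f p| ≤ C) : Integrable f μ :=
  Integrable.of_bound hf.aestronglyMeasurable C (ae_of_all _ h)

lemma IsGraphon.meas {V : ℝ → ℝ → ℝ} (hV : IsGraphon V) :
    Measurable (fun p : ℝ × ℝ => V p.1 p.2) := hV.2.1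

lemma IsGraphon.integrable {V : ℝ → ℝ → ℝ} (hV : IsGraphon V) (μ : Measure (ℝ × ℝ))
    [IsFiniteMeasure μ] : Integrable (fun p : ℝ × ℝ => V p.1 p.2) μ :=
  integrable_bdd hV.meas (C := 1) fun p => by
    rw [abs_of_nonneg (hV.2.2 _ _).1]; exact (hV.2.2 _ _).2

lemma IsGraphon.integrable_ell {V : ℝ → ℝ → ℝ} (hV : IsGraphon V) (u : ℝ) (μ : Measure (ℝ × ℝ))
    [IsFiniteMeasure μ] : Integrable (fun p : ℝ × ℝ => ell u (V p.1 p.2)) μ := by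
  unfold ell
  have := hV.integrable μ
  exact ((this.mul_const _).add (((integrable_const 1).sub this).mul_const _)).neg

lemma IsGraphon.comp {V : ℝ → ℝ → ℝ} (hV : IsGraphon V) {σ : ℝ → ℝ} (hσ : IsMPSelf σ) :
    IsGraphon (fun x y => V (σ x) (σ y)) := by
  refine ⟨fun x y => hV.1 _ _, ?_, fun x y => hV.2.2 _ _⟩
  have h := hσ.1.measurable
  exact hV.meas.comp (Measurable.prodMk (h.comp measurable_fst) (h.comp measurable_snd))

lemma cutNorm_bdd (U : ℝ → ℝ → ℝ) (C : ℝ) (hU : ∀ x y, |U x y| ≤ C) :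
    BddAbove { r : ℝ | ∃ S T : Set ℝ, MeasurableSet S ∧ MeasurableSet T ∧
    S ⊆ Set.Icc 0 1 ∧ T ⊆ Set.Icc 0 1 ∧ r = |∫ p in S ×ˢ T, U p.1 p.2| } := by
  have hC : 0 ≤ C := (abs_nonneg _).trans (hU 0 0)
  refine ⟨C, ?_⟩
  rintro r ⟨S, T, hS, hT, hS1, hT1, rfl⟩
  have hle : (volume : Measure (ℝ × ℝ)) (S ×ˢ T) ≤ 1 := by
    rw [Measure.volume_eq_prod, Measure.prod_prod]
    have h1 : (volume : Measure ℝ) S ≤ 1 := (measure_mono hS1).trans (by simp)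
    have h2 : (volume : Measure ℝ) T ≤ 1 := (measure_mono hT1).trans (by simp)
    exact mul_le_one' h1 h2
  have := norm_setIntegral_le_of_norm_le_const (μ := volume) (s := S ×ˢ T)
    (f := fun p : ℝ × ℝ => U p.1 p.2) (C := C) (lt_of_le_of_lt hle ENNReal.one_lt_top)
    (fun p _ => hU _ _)
  refine this.trans ?_
  have h3 : (volume : Measure (ℝ × ℝ)).real (S ×ˢ T) ≤ 1 := by
    have := ENNReal.toReal_mono ENNReal.one_ne_top hle
    simpa [Measure.real] using this
  exact mul_le_of_le_one_right hC h3

lemma le_cutNorm (U : ℝ → ℝ → ℝ) (C : ℝ) (hU : ∀ x y, |U x y| ≤ C) {S T : Set ℝ}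
    (hS : MeasurableSet S) (hT : MeasurableSet T) (hS1 : S ⊆ Icc 0 1) (hT1 : T ⊆ Icc 0 1) :
    |∫ p in S ×ˢ T, U p.1 p.2| ≤ cutNorm U :=
  le_csSup (cutNorm_bdd U C hU) ⟨S, T, hS, hT, hS1, hT1, rfl⟩

lemma cutNorm_le (U : ℝ → ℝ → ℝ) {r : ℝ} (h : ∀ S T : Set ℝ, MeasurableSet S → MeasurableSet T →
    S ⊆ Icc 0 1 → T ⊆ Icc 0 1 → |∫ p in S ×ˢ T, U p.1 p.2| ≤ r) : cutNorm U ≤ r := by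
  refine csSup_le ⟨_, ∅, ∅, MeasurableSet.empty, MeasurableSet.empty, by simp, by simp, rfl⟩ ?_
  rintro _ ⟨S, T, hS, hT, hS1, hT1, rfl⟩
  exact h S T hS hT hS1 hT1

lemma cutNorm_nonneg (U : ℝ → ℝ → ℝ) : 0 ≤ cutNorm U := by
  apply Real.sSup_nonneg
  rintro _ ⟨S, T, hS, hT, hS1, hT1, rfl⟩
  exact abs_nonneg _

lemma cutNorm_neg (U : ℝ → ℝ → ℝ) : cutNorm (fun x y => - U x y) = cutNorm U := by
  unfold cutNorm
  simp only [integral_neg, abs_neg]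

lemma integral_le_pos {α : Type*} [MeasurableSpace α] {ν μ : Measure α} (h : ν ≤ μ) {f : α → ℝ}
    (hf : Measurable f) (hi : Integrable f μ) :
    ∫ x, f x ∂ν ≤ ∫ x in {x | 0 < f x}, f x ∂μ := by
  have hm : MeasurableSet {x | 0 < f x} := measurableSet_lt measurable_const hf
  rw [← integral_indicator hm]
  have hi' : Integrable ({x | 0 < f x}.indicator f) μ := hi.indicator hm
  calc ∫ x, f x ∂ν ≤ ∫ x, {x | 0 < f x}.indicator f x ∂ν := by
        apply integral_mono (hi.mono_measure h) (hi'.mono_measure h)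
        intro x
        by_cases hx : 0 < f x
        · simp [Set.indicator, hx]
        · simp [Set.indicator, hx]; linarith
    _ ≤ _ := by
        apply integral_mono_measure h _ hi'
        refine ae_of_all _ fun x => ?_
        exact Set.indicator_nonneg (fun x hx => le_of_lt hx) x

lemma integral_le_cutNorm {U : ℝ → ℝ → ℝ} (hU : Measurable (Function.uncurry U)) (C : ℝ)
    (hC : ∀ x y, |U x y| ≤ C) {ν ν' : Measure ℝ} (h : ν ≤ lam) (h' : ν' ≤ lam) :
    ∫ p, U p.1 p.2 ∂(ν.prod ν') ≤ cutNorm U := by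
  have : IsFiniteMeasure ν := isFiniteMeasure_of_le _ h
  have : IsFiniteMeasure ν' := isFiniteMeasure_of_le _ h'
  have hUm : Measurable (fun p : ℝ × ℝ => U p.1 p.2) := hU
  have hi : ∀ μ : Measure (ℝ × ℝ), IsFiniteMeasure μ → Integrable (fun p : ℝ × ℝ => U p.1 p.2) μ :=
    fun μ _ => integrable_bdd hUm (fun p => hC _ _)
  have sm : StronglyMeasurable (fun p : ℝ × ℝ => U p.1 p.2) := hUm.stronglyMeasurable
  rw [integral_prod _ (hi _ inferInstance)]
  let f : ℝ → ℝ := fun x => ∫ y, U x y ∂ν'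
  have hf : Measurable f := (sm.integral_prod_right (ν := ν')).measurable
  have hif : Integrable f lam := (hi (lam.prod ν') inferInstance).integral_prod_left
  let S := {x | 0 < f x}
  have hS : MeasurableSet S := measurableSet_lt measurable_const hf
  have e1 : ∫ x, f x ∂ν ≤ ∫ x in S, f x ∂lam := integral_le_pos h hf hif
  let g : ℝ → ℝ := fun y => ∫ x in S, U x y ∂lam
  have hg : Measurable g := (sm.integral_prod_left (μ := lam.restrict S)).measurable
  have hig : Integrable g lam := (hi ((lam.restrict S).prod lam) inferInstance).integral_prod_right
  have e2 : ∫ x in S, f x ∂lam = ∫ y, g y ∂ν' := by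
    rw [← integral_prod_symm _ (hi ((lam.restrict S).prod ν') inferInstance),
      integral_prod _ (hi ((lam.restrict S).prod ν') inferInstance)]
  let T := {x | 0 < g x}
  have hT : MeasurableSet T := measurableSet_lt measurable_const hg
  have e3 : ∫ y, g y ∂ν' ≤ ∫ y in T, g y ∂lam := integral_le_pos h' hg hig
  have e4 : ∫ y in T, g y ∂lam = ∫ p in (S ∩ Icc 0 1) ×ˢ (T ∩ Icc 0 1), U p.1 p.2 := by
    rw [Measure.volume_eq_prod, ← Measure.prod_restrict, ← Measure.restrict_restrict hS,
      ← Measure.restrict_restrict hT, integral_prod_symm _ (hi _ inferInstance)]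
  calc _ ≤ ∫ p in (S ∩ Icc 0 1) ×ˢ (T ∩ Icc 0 1), U p.1 p.2 := by
        rw [← e4]; exact e1.trans (e2.le.trans e3)
    _ ≤ _ := le_abs_self _
    _ ≤ _ := le_cutNorm U C hC (hS.inter measurableSet_Icc) (hT.inter measurableSet_Icc)
        inter_subset_right inter_subset_right

lemma abs_integral_le_cutNorm {U : ℝ → ℝ → ℝ} (hU : Measurable (Function.uncurry U)) (C : ℝ)
    (hC : ∀ x y, |U x y| ≤ C) {ν ν' : Measure ℝ} (h : ν ≤ lam) (h' : ν' ≤ lam) :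
    |∫ p, U p.1 p.2 ∂(ν.prod ν')| ≤ cutNorm U := by
  rw [abs_le']
  refine ⟨integral_le_cutNorm hU C hC h h', ?_⟩
  rw [← integral_neg, ← cutNorm_neg]
  exact integral_le_cutNorm (U := fun x y => - U x y) hU.neg C (by simpa using hC) h h'

def JJ (m : ℕ) (ν : Fin (m + 1) → Measure ℝ) (u : Fin (m + 1) → Fin (m + 1) → Fin (2 * m + 1))
    (V : ℝ → ℝ → ℝ) : ℝ :=
  ∑ j, ∑ j', ∫ p, ell (uval m (u j j')) (V p.1 p.2) ∂((ν j).prod (ν j'))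

def FF (m : ℕ) (V : ℝ → ℝ → ℝ) : ℝ :=
  sInf {r : ℝ | ∃ (ν : Fin (m + 1) → Measure ℝ) (u : Fin (m + 1) → Fin (m + 1) → Fin (2 * m + 1)),
    ∑ j, ν j = lam ∧ r = JJ m ν u V}

lemma JJ_nonneg {m : ℕ} {ν : Fin (m + 1) → Measure ℝ}
    (u : Fin (m + 1) → Fin (m + 1) → Fin (2 * m + 1)) {V : ℝ → ℝ → ℝ} (hV : IsGraphon V) :
    0 ≤ JJ m ν u V :=
  Finset.sum_nonneg fun _ _ => Finset.sum_nonneg fun _ _ => integral_nonneg fun _ =>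
    ell_nonneg (uval_pos _ _) (uval_lt_one _ _) (hV.2.2 _ _)

lemma FF_le {m : ℕ} {ν : Fin (m + 1) → Measure ℝ} (hν : ∑ j, ν j = lam)
    (u : Fin (m + 1) → Fin (m + 1) → Fin (2 * m + 1)) {V : ℝ → ℝ → ℝ} (hV : IsGraphon V) :
    FF m V ≤ JJ m ν u V := by
  refine csInf_le ⟨0, ?_⟩ ⟨ν, u, hν, rfl⟩
  rintro _ ⟨ν, u, _, rfl⟩
  exact JJ_nonneg u hV

lemma exists_part (m : ℕ) : ∃ ν : Fin (m + 1) → Measure ℝ, ∑ j, ν j = lam := by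
  classical
  exact ⟨Pi.single 0 lam, by simp⟩

lemma le_FF {m : ℕ} {V : ℝ → ℝ → ℝ} {r : ℝ} (h : ∀ (ν : Fin (m + 1) → Measure ℝ)
    (u : Fin (m + 1) → Fin (m + 1) → Fin (2 * m + 1)), ∑ j, ν j = lam → r ≤ JJ m ν u V) :
    r ≤ FF m V := by
  obtain ⟨ν, hν⟩ := exists_part m
  refine le_csInf ⟨_, ν, fun _ _ => 0, hν, rfl⟩ ?_
  rintro _ ⟨ν, u, hν, rfl⟩
  exact h ν u hν

lemma FF_nonneg (m : ℕ) {V : ℝ → ℝ → ℝ} (hV : IsGraphon V) : 0 ≤ FF m V :=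
  le_FF fun _ u _ => JJ_nonneg u hV

lemma sum_prod_integral {k : ℕ} {ν : Fin k → Measure ℝ} (hν : ∑ j, ν j = lam) {f : ℝ × ℝ → ℝ}
    (hf : Integrable f (lam.prod lam)) :
    ∑ j, ∑ j', ∫ p, f p ∂((ν j).prod (ν j')) = ∫ p, f p ∂(lam.prod lam) := by
  have hfin : ∀ j, IsFiniteMeasure (ν j) := fun j => isFiniteMeasure_of_le _ (le_lam hν j)
  have e : lam.prod lam = ∑ q : Fin k × Fin k, (ν q.1).prod (ν q.2) := by
    conv_lhs => rw [← hν]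
    rw [← Measure.sum_fintype, Measure.prod_sum, Measure.sum_fintype]
  have hle : ∀ q : Fin k × Fin k, (ν q.1).prod (ν q.2) ≤ lam.prod lam := by
    intro q
    rw [e, Measure.le_iff]
    intro s _
    rw [Measure.finsetSum_apply]
    exact Finset.single_le_sum (f := fun q : Fin k × Fin k => (ν q.1).prod (ν q.2) s)
      (fun _ _ => zero_le) (Finset.mem_univ q)
  rw [e, integral_finsetSum_measure (fun q _ => hf.mono_measure (hle q)),
    ← Finset.univ_product_univ, Finset.sum_product]

lemma FF_le_one (m : ℕ) {V : ℝ → ℝ → ℝ} (hV : IsGraphon V) : FF m V ≤ 1 := by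
  obtain ⟨ν, hν⟩ := exists_part m
  refine (FF_le hν (fun _ _ => ⟨m, by omega⟩) hV).trans ?_
  have hu : uval m ⟨m, by omega⟩ = 1 / 2 := by
    unfold uval; field_simp
  have hl : ∀ v, ell (1/2) v = 1 := by
    intro v
    have : Real.logb 2 (1/2) = -1 := by
      rw [one_div, Real.logb_inv, Real.logb_self_eq_one (by norm_num)]
    unfold ell
    rw [show (1:ℝ) - 1 / 2 = 1 / 2 by norm_num, this]; ring
  simp only [JJ, hu, hl]
  rw [sum_prod_integral hν (integrable_const 1)]
  simp

lemma map_part_sum {k : ℕ} {ν : Fin k → Measure ℝ} (hν : ∑ j, ν j = lam) {σ : ℝ → ℝ} (hσ : IsMPSelf σ) :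
    ∑ j, (ν j).map σ = lam := by
  ext s hs
  rw [Measure.finsetSum_apply]
  simp_rw [Measure.map_apply hσ.1.measurable hs]
  rw [← Measure.finsetSum_apply, hν, hσ.1.measure_preimage hs.nullMeasurableSet]

lemma JJ_map {m : ℕ} {ν : Fin (m + 1) → Measure ℝ} (hν : ∑ j, ν j = lam)
    (u : Fin (m + 1) → Fin (m + 1) → Fin (2 * m + 1)) {V : ℝ → ℝ → ℝ} (hV : IsGraphon V)
    {σ : ℝ → ℝ} (hσ : IsMPSelf σ) :
    JJ m (fun j => (ν j).map σ) u V = JJ m ν u (fun x y => V (σ x) (σ y)) := by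
  have hfin : ∀ j, IsFiniteMeasure (ν j) := fun j => isFiniteMeasure_of_le _ (le_lam hν j)
  unfold JJ
  refine Finset.sum_congr rfl fun j _ => Finset.sum_congr rfl fun j' _ => ?_
  have hm := hσ.1.measurable
  rw [Measure.map_prod_map _ _ hm hm, integral_map (hm.prodMap hm).aemeasurable]
  · rfl
  · have := hV.meas
    unfold ell
    exact Measurable.aestronglyMeasurable (by fun_prop)

lemma FF_le_comp (m : ℕ) {V : ℝ → ℝ → ℝ} (hV : IsGraphon V) {σ : ℝ → ℝ} (hσ : IsMPSelf σ) :
    FF m V ≤ FF m (fun x y => V (σ x) (σ y)) := by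
  refine le_FF fun ν u hν => ?_
  rw [← JJ_map hν u hV hσ]
  exact FF_le (map_part_sum hν hσ) u hV

lemma withDensity_fsum {k : ℕ} (g : Fin k → ℝ → ENNReal) (hg : ∀ j, Measurable (g j)) :
    ∑ j, lam.withDensity (g j) = lam.withDensity (fun x => ∑ j, g j x) := by
  ext s hs
  rw [Measure.finsetSum_apply, withDensity_apply _ hs, lintegral_finsetSum _ (fun j _ => hg j)]
  exact Finset.sum_congr rfl fun j _ => withDensity_apply _ hs

lemma exists_pullback {k : ℕ} {ν : Fin k → Measure ℝ} (hν : ∑ j, ν j = lam) {σ : ℝ → ℝ}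
    (hσ : IsMPSelf σ) : ∃ ν' : Fin k → Measure ℝ, ∑ j, ν' j = lam ∧ ∀ j, (ν' j).map σ = ν j := by
  have hfin : ∀ j, IsFiniteMeasure (ν j) := fun j => isFiniteMeasure_of_le _ (le_lam hν j)
  let g : Fin k → ℝ → ENNReal := fun j => (ν j).rnDeriv lam
  have hg : ∀ j, Measurable (g j) := fun j => Measure.measurable_rnDeriv _ _
  have hgν : ∀ j, lam.withDensity (g j) = ν j := fun j =>
    Measure.withDensity_rnDeriv_eq _ _ (Measure.absolutelyContinuous_of_le (le_lam hν j))
  have h1 : (fun x => ∑ j, g j x) =ᵐ[lam] 1 := by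
    refine ((withDensity_eq_iff measurable_one.aemeasurable
      (Finset.measurable_fun_sum _ fun j _ => hg j).aemeasurable (by simp)).1 ?_).symm
    rw [← withDensity_fsum g hg, withDensity_one]
    simp_rw [hgν]
    exact hν.symm
  have hm := hσ.1.measurable
  refine ⟨fun j => lam.withDensity (fun x => g j (σ x)), ?_, fun j => ?_⟩
  · rw [withDensity_fsum (fun j x => g j (σ x)) (fun j => (hg j).comp hm)]
    conv_rhs => rw [← withDensity_one (μ := lam)]
    apply withDensity_congr_ae
    exact hσ.1.quasiMeasurePreserving.ae_eq_comp h1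
  · rw [← hgν j]
    ext s hs
    rw [Measure.map_apply hm hs, withDensity_apply _ (hm hs), withDensity_apply _ hs]
    exact hσ.1.setLIntegral_comp_preimage hs (hg j)

lemma FF_comp_le (m : ℕ) {V : ℝ → ℝ → ℝ} (hV : IsGraphon V) {σ : ℝ → ℝ} (hσ : IsMPSelf σ) :
    FF m (fun x y => V (σ x) (σ y)) ≤ FF m V := by
  refine le_FF fun ν u hν => ?_
  obtain ⟨ν', h1, h2⟩ := exists_pullback hν hσ
  have : ν = fun j => (ν' j).map σ := by funext j; exact (h2 j).symm
  rw [this, JJ_map h1 u hV hσ]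
  exact FF_le h1 u (hV.comp hσ)

/-- Lipschitz constant. -/
def CC (m : ℕ) : ℝ := ((m : ℝ) + 1) * (((m : ℝ) + 1) *
  ∑ a : Fin (2 * m + 1), |Real.logb 2 (uval m a) - Real.logb 2 (1 - uval m a)|)

lemma CC_nonneg (m : ℕ) : 0 ≤ CC m := by unfold CC; positivity

lemma IsGraphon.sub_abs {V V' : ℝ → ℝ → ℝ} (hV : IsGraphon V) (hV' : IsGraphon V') (x y z t : ℝ) :
    |V x y - V' z t| ≤ 1 := by
  have h1 := hV.2.2 x y
  have h2 := hV'.2.2 z t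
  rw [abs_le]; constructor <;> linarith [h1.1, h1.2, h2.1, h2.2]

lemma FF_le_cutNorm (m : ℕ) {V V' : ℝ → ℝ → ℝ} (hV : IsGraphon V) (hV' : IsGraphon V') :
    FF m V ≤ FF m V' + CC m * cutNorm (fun x y => V x y - V' x y) := by
  rw [← sub_le_iff_le_add]
  refine le_FF fun ν u hν => ?_
  rw [sub_le_iff_le_add]
  have hfin : ∀ j, IsFiniteMeasure (ν j) := fun j => isFiniteMeasure_of_le _ (le_lam hν j)
  refine (FF_le hν u hV).trans ?_
  set D := cutNorm (fun x y => V x y - V' x y) with hD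
  set B := ∑ a : Fin (2 * m + 1), |Real.logb 2 (uval m a) - Real.logb 2 (1 - uval m a)| with hB
  have key : ∀ j j', ∫ p, ell (uval m (u j j')) (V p.1 p.2) ∂((ν j).prod (ν j')) ≤
      ∫ p, ell (uval m (u j j')) (V' p.1 p.2) ∂((ν j).prod (ν j')) + B * D := by
    intro j j'
    set q := uval m (u j j') with hq
    have e : ∫ p, ell q (V p.1 p.2) ∂((ν j).prod (ν j')) -
        ∫ p, ell q (V' p.1 p.2) ∂((ν j).prod (ν j')) =
        -(Real.logb 2 q - Real.logb 2 (1 - q)) *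
          ∫ p, (V p.1 p.2 - V' p.1 p.2) ∂((ν j).prod (ν j')) := by
      rw [← integral_sub (hV.integrable_ell _ _) (hV'.integrable_ell _ _), ← integral_const_mul]
      refine integral_congr_ae (ae_of_all _ fun p => ?_)
      simp only [ell]; ring
    have h1 : |∫ p, (V p.1 p.2 - V' p.1 p.2) ∂((ν j).prod (ν j'))| ≤ D :=
      abs_integral_le_cutNorm (U := fun x y => V x y - V' x y) (hV.meas.sub hV'.meas) 1
        (fun x y => hV.sub_abs hV' _ _ _ _) (le_lam hν j) (le_lam hν j')
    have h2 : |Real.logb 2 q - Real.logb 2 (1 - q)| ≤ B :=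
      Finset.single_le_sum
        (f := fun a => |Real.logb 2 (uval m a) - Real.logb 2 (1 - uval m a)|)
        (fun _ _ => abs_nonneg _) (Finset.mem_univ (u j j'))
    have h3 : -(Real.logb 2 q - Real.logb 2 (1 - q)) *
          ∫ p, (V p.1 p.2 - V' p.1 p.2) ∂((ν j).prod (ν j')) ≤ B * D := by
      refine (le_abs_self _).trans ?_
      rw [abs_mul, abs_neg]
      exact mul_le_mul h2 h1 (abs_nonneg _) ((abs_nonneg _).trans h2)
    linarith
  unfold JJ
  calc _ ≤ ∑ j, ∑ j', (∫ p, ell (uval m (u j j')) (V' p.1 p.2) ∂((ν j).prod (ν j')) + B * D) :=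
        Finset.sum_le_sum fun j _ => Finset.sum_le_sum fun j' _ => key j j'
    _ = _ := by
      simp only [Finset.sum_add_distrib, Finset.sum_const, Finset.card_univ, Fintype.card_fin,
        nsmul_eq_mul, CC]
      rw [← hB]; push_cast; ring

lemma deltaCut_nonneg (W₁ W₂ : ℝ → ℝ → ℝ) : 0 ≤ deltaCut W₁ W₂ := by
  apply Real.sInf_nonneg
  rintro _ ⟨_, _, _, _, rfl⟩
  exact cutNorm_nonneg _

lemma isMPSelf_id : IsMPSelf id := ⟨MeasurePreserving.id _, fun _ h => h⟩

lemma deltaCut_self (W : ℝ → ℝ → ℝ) : deltaCut W W = 0 := by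
  apply le_antisymm _ (deltaCut_nonneg _ _)
  refine csInf_le ⟨0, ?_⟩ ⟨id, id, isMPSelf_id, isMPSelf_id, ?_⟩
  · rintro _ ⟨_, _, _, _, rfl⟩
    exact cutNorm_nonneg _
  · simp only [sub_self]
    apply le_antisymm (cutNorm_nonneg _)
    apply cutNorm_le
    intros; simp

lemma FF_lip (m : ℕ) {V V' : ℝ → ℝ → ℝ} (hV : IsGraphon V) (hV' : IsGraphon V') :
    |FF m V - FF m V'| ≤ CC m * deltaCut V V' := by
  have hne : { r : ℝ | ∃ σ₁ σ₂ : ℝ → ℝ, IsMPSelf σ₁ ∧ IsMPSelf σ₂ ∧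
    r = cutNorm (fun x y => V (σ₁ x) (σ₁ y) - V' (σ₂ x) (σ₂ y)) }.Nonempty :=
    ⟨_, id, id, isMPSelf_id, isMPSelf_id, rfl⟩
  have key : ∀ r ∈ { r : ℝ | ∃ σ₁ σ₂ : ℝ → ℝ, IsMPSelf σ₁ ∧ IsMPSelf σ₂ ∧
    r = cutNorm (fun x y => V (σ₁ x) (σ₁ y) - V' (σ₂ x) (σ₂ y)) },
      |FF m V - FF m V'| ≤ CC m * r := by
    rintro _ ⟨σ₁, σ₂, h1, h2, rfl⟩
    have a := FF_le_cutNorm m (hV.comp h1) (hV'.comp h2)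
    have b := FF_le_cutNorm m (hV'.comp h2) (hV.comp h1)
    rw [← cutNorm_neg] at b
    simp only [neg_sub] at b
    have c1 := FF_le_comp m hV h1
    have c2 := FF_comp_le m hV h1
    have c3 := FF_le_comp m hV' h2
    have c4 := FF_comp_le m hV' h2
    rw [abs_le]; constructor <;> linarith
  rcases (CC_nonneg m).eq_or_lt with h0 | h0
  · obtain ⟨r, hr⟩ := hne
    have := key r hr
    rw [← h0] at this ⊢; simpa using this
  · rw [mul_comm, ← div_le_iff₀ h0]
    refine le_csInf hne fun r hr => ?_
    rw [div_le_iff₀ h0, mul_comm]; exact key r hr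

lemma FF_continuous (m : ℕ) : Continuous (fun W : Graphon => FF m W.1) := by
  rw [continuous_iff_continuousAt]
  intro W₀
  rw [ContinuousAt, Metric.tendsto_nhds]
  intro ε hε
  have hC := CC_nonneg m
  have hε' : 0 < ε / (CC m + 1) := by positivity
  have hopen : IsOpen { W : Graphon | deltaCut W.1 W₀.1 < ε / (CC m + 1) } :=
    TopologicalSpace.isOpen_generateFrom_of_mem ⟨W₀, _, hε', rfl⟩
  have hmem : W₀ ∈ { W : Graphon | deltaCut W.1 W₀.1 < ε / (CC m + 1) } := by
    change deltaCut W₀.1 W₀.1 < _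
    rw [deltaCut_self]; exact hε'
  filter_upwards [hopen.mem_nhds hmem] with W hW
  have hW' : deltaCut W.1 W₀.1 < ε / (CC m + 1) := hW
  rw [Real.dist_eq]
  refine (FF_lip m W.2 W₀.2).trans_lt ?_
  rw [lt_div_iff₀ (by positivity)] at hW'
  nlinarith [deltaCut_nonneg W.1 W₀.1]

/-- The block of vertex `v`. -/
def blk {n : ℕ} (v : Fin n) : Set ℝ := {x | ⌈(n : ℝ) * x⌉ = ((v : ℕ) : ℤ) + 1}

lemma blk_eq {n : ℕ} (v : Fin n) :
    blk v = Ioc (((v : ℕ) : ℝ) / n) ((((v : ℕ) : ℝ) + 1) / n) := by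
  have hn : (0:ℝ) < n := by exact_mod_cast v.pos
  ext x
  change ⌈(n : ℝ) * x⌉ = ((v : ℕ) : ℤ) + 1 ↔ _
  rw [Int.ceil_eq_iff, mem_Ioc, div_lt_iff₀ hn, le_div_iff₀ hn]
  push_cast
  rw [add_sub_cancel_right, mul_comm]

lemma blk_meas {n : ℕ} (v : Fin n) : MeasurableSet (blk v) := by
  rw [blk_eq]; exact measurableSet_Ioc

lemma blk_unique {n : ℕ} {v w : Fin n} {x : ℝ} (hv : x ∈ blk v) (hw : x ∈ blk w) : v = w := by
  have h1 : ⌈(n : ℝ) * x⌉ = ((v : ℕ) : ℤ) + 1 := hv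
  have h2 : ⌈(n : ℝ) * x⌉ = ((w : ℕ) : ℤ) + 1 := hw
  ext; omega

lemma lam_blk {n : ℕ} (v : Fin n) : (lam (blk v)).toReal = 1 / n := by
  have hn : (0:ℝ) < n := by exact_mod_cast v.pos
  have hv : ((v : ℕ) : ℝ) + 1 ≤ n := by exact_mod_cast v.2
  have hsub : blk v ⊆ Icc 0 1 := by
    rw [blk_eq]
    intro x hx
    refine ⟨le_trans (by positivity) hx.1.le, hx.2.trans ?_⟩
    rw [div_le_one hn]; exact hv
  rw [Measure.restrict_apply (blk_meas v), inter_eq_self_of_subset_left hsub, blk_eq,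
    Real.volume_Ioc, ENNReal.toReal_ofReal]
  · field_simp; ring
  · rw [← sub_div]; apply div_nonneg _ hn.le; linarith

lemma graphon_blk {n : ℕ} (G : SimpleGraph (Fin n)) {v w : Fin n} {x y : ℝ} (hx : x ∈ blk v)
    (hy : y ∈ blk w) : graphonOfGraph G x y = adjR G v w := by
  classical
  unfold graphonOfGraph adjR
  by_cases h : G.Adj v w
  · rw [if_pos ⟨v, w, h, hx, hy⟩, if_pos h]
  · rw [if_neg, if_neg h]
    rintro ⟨i, j, hij, hi, hj⟩
    rw [blk_unique hx (show x ∈ blk i from hi), blk_unique hy (show y ∈ blk j from hj)] at h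
    exact h hij

lemma integral_blk {n : ℕ} (G : SimpleGraph (Fin n)) {ν ν' : Measure ℝ} [IsFiniteMeasure ν]
    [IsFiniteMeasure ν'] {q : ℝ} (h0 : 0 < q) (h1 : q < 1) :
    ∑ v, ∑ w, (if v ≠ w then (ν (blk v)).toReal * (ν' (blk w)).toReal * ell q (adjR G v w) else 0) ≤
      ∫ p, ell q (graphonOfGraph G p.1 p.2) ∂(ν.prod ν') := by
  classical
  have hW := isGraphon_graphonOfGraph G
  let φ : Fin n → Fin n → ℝ × ℝ → ℝ := fun v w =>
    ((blk v) ×ˢ (blk w)).indicator (fun _ => if v ≠ w then ell q (adjR G v w) else 0)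
  have hms : ∀ v w : Fin n, MeasurableSet ((blk v) ×ˢ (blk w)) := fun v w =>
    (blk_meas v).prod (blk_meas w)
  have hφi : ∀ v w, Integrable (φ v w) (ν.prod ν') := fun v w =>
    (integrable_const _).indicator (hms v w)
  have e : ∀ v w, ∫ p, φ v w p ∂(ν.prod ν') =
      (if v ≠ w then (ν (blk v)).toReal * (ν' (blk w)).toReal * ell q (adjR G v w) else 0) := by
    intro v w
    simp only [φ]
    rw [integral_indicator_const _ (hms v w), Measure.real, Measure.prod_prod, ENNReal.toReal_mul]
    split_ifs <;> simp
  simp_rw [← e]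
  simp_rw [← integral_finsetSum _ (fun w _ => hφi _ w)]
  rw [← integral_finsetSum _ (fun v _ => integrable_finsetSum _ (fun w _ => hφi v w))]
  apply integral_mono
  · exact integrable_finsetSum _ fun v _ => integrable_finsetSum _ (fun w _ => hφi v w)
  · exact hW.integrable_ell _ _
  intro p
  have hnn : 0 ≤ ell q (graphonOfGraph G p.1 p.2) := ell_nonneg h0 h1 (hW.2.2 _ _)
  change ∑ v, ∑ w, φ v w p ≤ ell q (graphonOfGraph G p.1 p.2)
  by_cases h : ∃ v w : Fin n, p.1 ∈ blk v ∧ p.2 ∈ blk w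
  · obtain ⟨v, w, hv, hw⟩ := h
    rw [Finset.sum_eq_single v, Finset.sum_eq_single w]
    · simp only [φ]
      rw [Set.indicator_of_mem (show p ∈ blk v ×ˢ blk w from ⟨hv, hw⟩), graphon_blk G hv hw]
      split_ifs
      · exact le_rfl
      · rw [← graphon_blk G hv hw]; exact hnn
    · intro w' _ hne
      apply Set.indicator_of_notMem
      rintro ⟨_, h2⟩
      exact hne (blk_unique h2 hw)
    · simp
    · intro v' _ hne
      apply Finset.sum_eq_zero
      intro w' _
      apply Set.indicator_of_notMem
      rintro ⟨h2, _⟩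
      exact hne (blk_unique h2 hv)
    · simp
  · push Not at h
    refine le_trans (le_of_eq ?_) hnn
    apply Finset.sum_eq_zero
    intro v _
    apply Finset.sum_eq_zero
    intro w _
    apply Set.indicator_of_notMem
    rintro ⟨h2, h3⟩
    exact h v w h2 h3

/-- Cost of coding `G`. -/
def cost (n m : ℕ) (i : (Fin n → Fin (m + 1)) × (Fin (m + 1) → Fin (m + 1) → Fin (2 * m + 1)))
    (G : SimpleGraph (Fin n)) : ℝ :=
  ∑ v, ∑ w, if v < w then ell (uval m (i.2 (i.1 v) (i.1 w))) (adjR G v w) else 0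

lemma exists_code {n m : ℕ} (G : SimpleGraph (Fin n)) {ν : Fin (m + 1) → Measure ℝ}
    (hν : ∑ j, ν j = lam) (u : Fin (m + 1) → Fin (m + 1) → Fin (2 * m + 1)) :
    ∃ i, cost n m i G ≤ (n:ℝ) ^ 2 / 2 * JJ m ν u (graphonOfGraph G) := by
  have hfin : ∀ j, IsFiniteMeasure (ν j) := fun j => isFiniteMeasure_of_le _ (le_lam hν j)
  let b : Fin n → Fin (m + 1) → ℝ := fun v j => n * (ν j (blk v)).toReal
  have hb0 : ∀ v j, 0 ≤ b v j := fun v j => by positivity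
  have hb : ∀ v, ∑ j, b v j = 1 := by
    intro v
    have hn : (0:ℝ) < n := by exact_mod_cast v.pos
    simp only [b]
    rw [← Finset.mul_sum, ← ENNReal.toReal_sum (fun j _ => measure_ne_top _ _),
      ← Measure.finsetSum_apply, hν, lam_blk]
    field_simp
  obtain ⟨c, hc⟩ := exists_assign b hb0 hb (fun v w j j' => ell (uval m (u j j')) (adjR G v w))
  have h1 : (∑ v, ∑ w, if v ≠ w then
      ∑ j, ∑ j', b v j * b w j' * ell (uval m (u j j')) (adjR G v w) else 0) ≤
      (n:ℝ) ^ 2 * JJ m ν u (graphonOfGraph G) := by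
    have e : (∑ v, ∑ w, if v ≠ w then
      ∑ j, ∑ j', b v j * b w j' * ell (uval m (u j j')) (adjR G v w) else 0) =
      (n:ℝ) ^ 2 * ∑ j, ∑ j', ∑ v, ∑ w, (if v ≠ w then (ν j (blk v)).toReal * (ν j' (blk w)).toReal *
        ell (uval m (u j j')) (adjR G v w) else 0) := by
      have e1 : ∀ v w, (if v ≠ w then
        ∑ j, ∑ j', b v j * b w j' * ell (uval m (u j j')) (adjR G v w) else 0) =
        ∑ j, ∑ j', (n:ℝ) ^ 2 * (if v ≠ w then (ν j (blk v)).toReal * (ν j' (blk w)).toReal *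
        ell (uval m (u j j')) (adjR G v w) else 0) := by
        intro v w
        split_ifs
        · refine Finset.sum_congr rfl fun j _ => Finset.sum_congr rfl fun j' _ => ?_
          simp only [b]; ring
        · simp
      simp_rw [e1, Finset.mul_sum]
      calc _ = ∑ v, ∑ j, ∑ w, ∑ j', (n:ℝ) ^ 2 * (if v ≠ w then (ν j (blk v)).toReal *
            (ν j' (blk w)).toReal * ell (uval m (u j j')) (adjR G v w) else 0) :=
            Finset.sum_congr rfl fun v _ => Finset.sum_comm
        _ = ∑ j, ∑ v, ∑ w, ∑ j', (n:ℝ) ^ 2 * (if v ≠ w then (ν j (blk v)).toReal *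
            (ν j' (blk w)).toReal * ell (uval m (u j j')) (adjR G v w) else 0) :=
            Finset.sum_comm
        _ = ∑ j, ∑ v, ∑ j', ∑ w, (n:ℝ) ^ 2 * (if v ≠ w then (ν j (blk v)).toReal *
            (ν j' (blk w)).toReal * ell (uval m (u j j')) (adjR G v w) else 0) :=
            Finset.sum_congr rfl fun j _ => Finset.sum_congr rfl fun v _ => Finset.sum_comm
        _ = _ := Finset.sum_congr rfl fun j _ => Finset.sum_comm
    rw [e]
    apply mul_le_mul_of_nonneg_left _ (by positivity)
    exact Finset.sum_le_sum fun j _ => Finset.sum_le_sum fun j' _ =>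
      integral_blk G (uval_pos _ _) (uval_lt_one _ _)
  have h2 : (∑ v, ∑ w, if v ≠ w then ell (uval m (u (c v) (c w))) (adjR G v w) else 0) =
      cost n m (c, u) G + cost n m (c, fun a b => u b a) G := by
    have : cost n m (c, fun a b => u b a) G =
        ∑ v, ∑ w, if w < v then ell (uval m (u (c v) (c w))) (adjR G v w) else 0 := by
      unfold cost
      rw [Finset.sum_comm]
      refine Finset.sum_congr rfl fun v _ => Finset.sum_congr rfl fun w _ => ?_
      rw [adjR_symm]
    rw [this, cost, ← Finset.sum_add_distrib]
    refine Finset.sum_congr rfl fun v _ => ?_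
    rw [← Finset.sum_add_distrib]
    refine Finset.sum_congr rfl fun w _ => ?_
    rcases lt_trichotomy v w with h | h | h
    · simp [h, h.ne, h.not_gt]
    · simp [h]
    · simp [h, h.ne', h.not_gt]
  have h3 := hc.trans h1
  rw [h2] at h3
  rcases le_total (cost n m (c, u) G) (cost n m (c, fun a b => u b a) G) with h | h
  · exact ⟨(c, u), by linarith⟩
  · exact ⟨(c, fun a b => u b a), by linarith⟩

instance : BorelSpace Graphon := ⟨rfl⟩

lemma entropy_bound {n : ℕ} (m : ℕ) (μ : Measure (SimpleGraph (Fin n))) [IsProbabilityMeasure μ] :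
    graphEntropy μ ≤ n * Real.logb 2 (m + 1) + Real.logb 2 (((2 * m + 1) ^ (m + 1)) ^ (m + 1)) +
      (n:ℝ) ^ 2 / 2 * ∫ W : Graphon, FF m W.1 ∂(μ.map graphonMap) := by
  let I := (Fin n → Fin (m + 1)) × (Fin (m + 1) → Fin (m + 1) → Fin (2 * m + 1))
  have hsel : ∀ G : SimpleGraph (Fin n), ∃ i : I,
      cost n m i G ≤ (n:ℝ) ^ 2 / 2 * FF m (graphonOfGraph G) := by
    intro G
    obtain ⟨i, hi⟩ := Finite.exists_min (fun i : I => cost n m i G)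
    refine ⟨i, ?_⟩
    rcases Nat.eq_zero_or_pos n with hn | hn
    · subst hn; simp [cost]
    · have hn' : (0:ℝ) < (n:ℝ) ^ 2 / 2 := by positivity
      rw [← div_le_iff₀' hn']
      refine le_FF fun ν u hν => ?_
      rw [div_le_iff₀' hn']
      obtain ⟨i', hi'⟩ := exists_code G hν u
      exact (hi i').trans hi'
  choose sel hs using hsel
  have hp1 : ∑ G : SimpleGraph (Fin n), (μ {G}).toReal = 1 := by
    rw [← ENNReal.toReal_sum (fun G _ => measure_ne_top _ _)]
    have : ∑ G : SimpleGraph (Fin n), μ {G} = 1 := by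
      rw [sum_measure_singleton]; simp
    rw [this]; simp
  have h := gibbs_code (I := I) (fun G : SimpleGraph (Fin n) => (μ {G}).toReal)
    (fun _ => ENNReal.toReal_nonneg) hp1 (cost n m)
    (fun i => kraft (fun v w => uval m (i.2 (i.1 v) (i.1 w))) (fun _ _ => uval_pos _ _)
      (fun _ _ => uval_lt_one _ _)) sel
  have hcard : Real.logb 2 (Fintype.card I) =
      n * Real.logb 2 (m + 1) + Real.logb 2 (((2 * m + 1) ^ (m + 1)) ^ (m + 1)) := by
    simp only [I, Fintype.card_prod, Fintype.card_fun, Fintype.card_fin]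
    push_cast
    rw [Real.logb_mul (by positivity) (by positivity), Real.logb_pow]
  have hint : ∫ W : Graphon, FF m W.1 ∂(μ.map graphonMap) =
      ∑ G : SimpleGraph (Fin n), (μ {G}).toReal * FF m (graphonOfGraph G) := by
    rw [integral_map (measurable_from_top.aemeasurable)
      (FF_continuous m).measurable.aestronglyMeasurable, integral_fintype]
    · rfl
    · exact Integrable.of_finite
  rw [hint, ← hcard]
  refine h.trans ?_
  rw [Finset.mul_sum]
  refine add_le_add le_rfl (Finset.sum_le_sum fun G _ => ?_)
  have := mul_le_mul_of_nonneg_left (hs G) (ENNReal.toReal_nonneg (a := μ {G}))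
  exact this.trans (le_of_eq (by ring))

lemma vlog_le {u v : ℝ} (hu : 0 < u) (hv : 0 ≤ v) :
    v * (Real.log v - Real.log u) ≤ v * (v / u - 1) := by
  rcases hv.eq_or_lt with h | h
  · rw [← h]; simp
  · refine mul_le_mul_of_nonneg_left ?_ hv
    rw [← Real.log_div h.ne' hu.ne']
    exact Real.log_le_sub_one_of_pos (by positivity)

lemma ell_le {u v : ℝ} (hu : 0 < u) (hu1 : u < 1) (hv : v ∈ Icc (0:ℝ) 1) :
    ell u v ≤ binEnt v + (v - u) ^ 2 / (u * (1 - u)) / Real.log 2 := by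
  have h1 := vlog_le hu hv.1
  have h2 := vlog_le (u := 1 - u) (v := 1 - v) (by linarith) (by linarith [hv.2])
  have hl : 0 < Real.log 2 := Real.log_pos (by norm_num)
  have e : (v - u) ^ 2 / (u * (1 - u)) = v * (v / u - 1) + (1 - v) * ((1 - v) / (1 - u) - 1) := by
    have : 1 - u ≠ 0 := by linarith
    field_simp
    ring
  rw [← sub_le_iff_le_add', e, le_div_iff₀ hl]
  unfold ell binEnt Real.logb
  have : (-(v * (Real.log u / Real.log 2) + (1 - v) * (Real.log (1 - u) / Real.log 2)) -
      (-v * (Real.log v / Real.log 2) - (1 - v) * (Real.log (1 - v) / Real.log 2))) * Real.log 2 =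
      v * (Real.log v - Real.log u) + (1 - v) * (Real.log (1 - v) - Real.log (1 - u)) := by
    field_simp
    ring
  rw [this]
  linarith

lemma binEnt_eq (v : ℝ) : binEnt v = Real.binEntropy v / Real.log 2 := by
  unfold binEnt Real.binEntropy Real.logb
  rw [Real.log_inv, Real.log_inv]; ring

lemma binEnt_nonneg {v : ℝ} (hv : v ∈ Icc (0:ℝ) 1) : 0 ≤ binEnt v := by
  rw [binEnt_eq]
  exact div_nonneg (Real.binEntropy_nonneg hv.1 hv.2) (Real.log_nonneg (by norm_num))

lemma binEnt_le_one (v : ℝ) : binEnt v ≤ 1 := by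
  rw [binEnt_eq, div_le_one (Real.log_pos (by norm_num))]
  exact Real.binEntropy_le_log_two

lemma IsGraphon.integrable_binEnt {V : ℝ → ℝ → ℝ} (hV : IsGraphon V) :
    Integrable (fun p : ℝ × ℝ => binEnt (V p.1 p.2)) (lam.prod lam) := by
  refine integrable_bdd (C := 1) ?_ fun p => ?_
  · have : Measurable binEnt := by unfold binEnt Real.logb; fun_prop
    exact this.comp hV.meas
  · rw [abs_of_nonneg (binEnt_nonneg (hV.2.2 _ _))]
    exact binEnt_le_one _

lemma graphonEnt_eq {V : ℝ → ℝ → ℝ} (hV : IsGraphon V) :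
    graphonEnt V = ∫ p, binEnt (V p.1 p.2) ∂(lam.prod lam) := by
  rw [integral_prod _ hV.integrable_binEnt]
  rfl

lemma graphonEnt_le_one {V : ℝ → ℝ → ℝ} (hV : IsGraphon V) : graphonEnt V ≤ 1 := by
  rw [graphonEnt_eq hV]
  have := integral_mono hV.integrable_binEnt (integrable_const (1:ℝ)) (fun p => binEnt_le_one _)
  refine this.trans (le_of_eq ?_)
  have : IsProbabilityMeasure lam := ⟨by simp [lam]⟩
  simp

lemma sum_blk (k : ℕ) (hk : 0 < k) : ∑ j : Fin k, lam.restrict (blk j) = lam := by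
  have hk' : (0:ℝ) < k := by exact_mod_cast hk
  rw [← Measure.sum_fintype, ← Measure.restrict_iUnion]
  · refine Measure.restrict_eq_self_of_ae_mem ?_
    have h0 : ∀ᵐ x ∂lam, x ≠ 0 := by
      have : lam {0} = 0 := by simp [lam]
      rw [ae_iff]
      simpa using this
    have h1 : ∀ᵐ x ∂lam, x ∈ Icc (0:ℝ) 1 := ae_restrict_mem measurableSet_Icc
    filter_upwards [h0, h1] with x hx0 hx1
    have hpos : 0 < x := lt_of_le_of_ne hx1.1 (Ne.symm hx0)
    have c1 : 0 < ⌈(k:ℝ) * x⌉ := Int.ceil_pos.2 (by positivity)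
    have c2 : ⌈(k:ℝ) * x⌉ ≤ k := by
      rw [Int.ceil_le]; push_cast; nlinarith [hx1.2]
    refine mem_iUnion.2 ⟨⟨(⌈(k:ℝ) * x⌉ - 1).toNat, by omega⟩, ?_⟩
    change ⌈(k:ℝ) * x⌉ = (((⌈(k:ℝ) * x⌉ - 1).toNat : ℕ) : ℤ) + 1
    omega
  · intro i j hij
    exact Set.disjoint_left.2 fun x hx hy => hij (blk_unique hx hy)
  · exact blk_meas

/-- Clamping. -/
def clampR (η t : ℝ) : ℝ := max η (min t (1 - η))

lemma clampR_lip (η s t : ℝ) : |clampR η s - clampR η t| ≤ |s - t| := by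
  unfold clampR
  refine (abs_max_sub_max_le_max _ _ _ _).trans (max_le (by simp) ?_)
  exact (abs_min_sub_min_le_max _ _ _ _).trans (max_le le_rfl (by simp))

lemma exists_grid {m : ℕ} {η : ℝ} (hη : 0 < η) (hm : 1 / (2 * (m:ℝ) + 2) ≤ η / 2) {t : ℝ}
    (h1 : η ≤ t) (h2 : t ≤ 1 - η) :
    ∃ a : Fin (2 * m + 1), uval m a ≤ t ∧ t - 1 / (2 * (m:ℝ) + 2) ≤ uval m a := by
  have hp : (0:ℝ) < 2 * m + 2 := by positivity
  rw [div_le_iff₀ hp] at hm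
  have ht : 2 ≤ t * (2 * m + 2) := by nlinarith
  have f1 : 2 ≤ ⌊t * (2 * (m:ℝ) + 2)⌋₊ := Nat.le_floor (by exact_mod_cast ht)
  have f2 : ⌊t * (2 * (m:ℝ) + 2)⌋₊ < 2 * m + 2 := by
    rw [Nat.floor_lt (by positivity)]
    push_cast
    nlinarith
  have f3 := Nat.floor_le (show 0 ≤ t * (2 * (m:ℝ) + 2) by positivity)
  have f4 := Nat.lt_floor_add_one (t * (2 * (m:ℝ) + 2))
  refine ⟨⟨⌊t * (2 * (m:ℝ) + 2)⌋₊ - 1, by omega⟩, ?_⟩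
  have e : uval m ⟨⌊t * (2 * (m:ℝ) + 2)⌋₊ - 1, by omega⟩ =
      (⌊t * (2 * (m:ℝ) + 2)⌋₊ : ℝ) / (2 * m + 2) := by
    unfold uval
    congr 1
    simp only
    rw [Nat.cast_sub (by omega)]; push_cast; ring
  rw [e]
  constructor
  · rw [div_le_iff₀ hp]; exact f3
  · rw [sub_le_iff_le_add, ← add_div, le_div_iff₀ hp]; exact f4.le

lemma point_bound {η t u v D δ : ℝ} (hη : 0 < η) (hη1 : η ≤ 1 / 4) (hv : v ∈ Icc (0:ℝ) 1)
    (hδ : δ ≤ η / 2) (hu : u ≤ clampR η t) (hu' : clampR η t - δ ≤ u) (hD : |v - t| + δ ≤ D) :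
    (v - u) ^ 2 / (u * (1 - u)) ≤ 8 * η + 8 / η * D := by
  have ht1 : η ≤ clampR η t := le_max_left _ _
  have ht2 : clampR η t ≤ 1 - η := max_le (by linarith) (min_le_right _ _)
  have hc1 : η ≤ clampR η v := le_max_left _ _
  have hc2 : clampR η v ≤ 1 - η := max_le (by linarith) (min_le_right _ _)
  have hl := clampR_lip η v t
  have hvc : |v - clampR η v| ≤ η := by
    unfold clampR
    rw [abs_le]
    constructor
    · rcases max_cases η (min v (1 - η)) with h | h <;>
      rcases min_cases v (1 - η) with h' | h' <;> linarith [hv.1, hv.2]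
    · rcases max_cases η (min v (1 - η)) with h | h <;>
      rcases min_cases v (1 - η) with h' | h' <;> linarith [hv.1, hv.2]
  have hδ0 : 0 ≤ δ := by linarith
  have hcu : |clampR η v - u| ≤ D := by
    rw [abs_le] at hl ⊢
    constructor <;> linarith [hl.1, hl.2]
  have hcu1 : |clampR η v - u| ≤ 1 := by
    rw [abs_le]; constructor <;> linarith
  have hden : η / 4 ≤ u * (1 - u) := by nlinarith
  have hsq : (v - u) ^ 2 ≤ 2 * η ^ 2 + 2 * D := by
    have a1 : (v - clampR η v) ^ 2 ≤ η ^ 2 := sq_le_sq' (abs_le.1 hvc).1 (abs_le.1 hvc).2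
    have a2 : (clampR η v - u) ^ 2 ≤ D := by
      rw [← sq_abs]; nlinarith [abs_nonneg (clampR η v - u)]
    nlinarith [sq_nonneg ((v - clampR η v) - (clampR η v - u))]
  calc (v - u) ^ 2 / (u * (1 - u)) ≤ (2 * η ^ 2 + 2 * D) / (η / 4) := by
        gcongr
        exact (sq_nonneg _).trans hsq
    _ = _ := by field_simp; ring

lemma FF_le_approx {m : ℕ} {η τ : ℝ} (hη : 0 < η) (hη1 : η ≤ 1 / 4)
    (hm : 1 / (2 * (m:ℝ) + 2) ≤ η / 2) {V : ℝ → ℝ → ℝ} (hV : IsGraphon V) {g : ℝ × ℝ → ℝ}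
    (hg : Integrable g (lam.prod lam))
    (hgu : ∀ p q : ℝ × ℝ, dist p q ≤ 1 / ((m:ℝ) + 1) → |g p - g q| ≤ τ) :
    FF m V ≤ graphonEnt V + 16 * η +
      16 / η * ((∫ p, |V p.1 p.2 - g p| ∂(lam.prod lam)) + τ + 1 / (2 * (m:ℝ) + 2)) := by
  have hprob : IsProbabilityMeasure lam := ⟨by simp [lam]⟩
  let q : Fin (m + 1) → Fin (m + 1) → ℝ × ℝ := fun j j' =>
    (((j : ℕ) : ℝ) / ((m:ℝ) + 1), ((j' : ℕ) : ℝ) / ((m:ℝ) + 1))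
  have hex : ∀ j j' : Fin (m + 1), ∃ a : Fin (2 * m + 1), uval m a ≤ clampR η (g (q j j')) ∧
      clampR η (g (q j j')) - 1 / (2 * (m:ℝ) + 2) ≤ uval m a := fun j j' =>
    exists_grid hη hm (le_max_left _ _) (max_le (by linarith) (min_le_right _ _))
  choose u hu1 hu2 using hex
  have hν := sum_blk (m + 1) (Nat.succ_pos m)
  refine (FF_le hν u hV).trans ?_
  let E : ℝ × ℝ → ℝ := fun p => binEnt (V p.1 p.2) + (16 * η +
    16 / η * (|V p.1 p.2 - g p| + (τ + 1 / (2 * (m:ℝ) + 2))))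
  have hVg : Integrable (fun p : ℝ × ℝ => |V p.1 p.2 - g p|) (lam.prod lam) :=
    ((hV.integrable _).sub hg).abs
  have hi1 : Integrable (fun p : ℝ × ℝ => |V p.1 p.2 - g p| + (τ + 1 / (2 * (m:ℝ) + 2)))
    (lam.prod lam) := hVg.add (integrable_const _)
  have hi2 : Integrable (fun p : ℝ × ℝ => 16 * η +
    16 / η * (|V p.1 p.2 - g p| + (τ + 1 / (2 * (m:ℝ) + 2)))) (lam.prod lam) :=
    (integrable_const _).add (hi1.const_mul _)
  have hE : Integrable E (lam.prod lam) := hV.integrable_binEnt.add hi2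
  have hEint : ∫ p, E p ∂(lam.prod lam) = graphonEnt V + 16 * η +
      16 / η * ((∫ p, |V p.1 p.2 - g p| ∂(lam.prod lam)) + τ + 1 / (2 * (m:ℝ) + 2)) := by
    have e1 : ∫ p, E p ∂(lam.prod lam) = _ := integral_add hV.integrable_binEnt hi2
    rw [e1, integral_add (integrable_const _) (hi1.const_mul _), integral_const_mul (16 / η),
      integral_add hVg (integrable_const _), ← graphonEnt_eq hV]
    simp only [integral_const, probReal_univ, one_smul]
    ring
  rw [← hEint, ← sum_prod_integral hν hE]
  refine Finset.sum_le_sum fun j _ => Finset.sum_le_sum fun j' _ => ?_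
  rw [Measure.prod_restrict]
  refine setIntegral_mono_on (hV.integrable_ell _ _).integrableOn hE.integrableOn
    ((blk_meas j).prod (blk_meas j')) fun p hp => ?_
  have hblk : ∀ (i : Fin (m + 1)) (x : ℝ), x ∈ blk i →
      |x - ((i : ℕ) : ℝ) / ((m:ℝ) + 1)| ≤ 1 / ((m:ℝ) + 1) := by
    intro i x hx
    rw [blk_eq] at hx
    have h1 := hx.1
    have h2 := hx.2
    push_cast at h1 h2
    rw [add_div] at h2
    rw [abs_le]
    constructor
    · have : 0 < 1 / ((m:ℝ) + 1) := by positivity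
      linarith
    · linarith
  have hd : dist p (q j j') ≤ 1 / ((m:ℝ) + 1) := by
    rw [Prod.dist_eq]
    exact max_le (hblk j _ hp.1) (hblk j' _ hp.2)
  have hgp := hgu _ _ hd
  have hl2 : (1:ℝ) / 2 ≤ Real.log 2 := by linarith [Real.log_two_gt_d9]
  have hpb := point_bound hη hη1 (hV.2.2 p.1 p.2) hm (hu1 j j') (hu2 j j')
    (D := |V p.1 p.2 - g p| + (τ + 1 / (2 * (m:ℝ) + 2)))
    (by
      have := abs_sub_le (V p.1 p.2) (g p) (g (q j j'))
      linarith)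
  have hup := uval_pos m (u j j')
  have hul := uval_lt_one m (u j j')
  refine (ell_le hup hul (hV.2.2 _ _)).trans ?_
  refine add_le_add le_rfl ?_
  have hnn : 0 ≤ (V p.1 p.2 - uval m (u j j')) ^ 2 / (uval m (u j j') * (1 - uval m (u j j'))) :=
    div_nonneg (sq_nonneg _) (mul_nonneg hup.le (by linarith))
  rw [div_le_iff₀ (by linarith)]
  calc _ ≤ 8 * η + 8 / η * (|V p.1 p.2 - g p| + (τ + 1 / (2 * (m:ℝ) + 2))) := hpb
    _ = (16 * η + 16 / η * (|V p.1 p.2 - g p| + (τ + 1 / (2 * (m:ℝ) + 2)))) * (1 / 2) := by ring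
    _ ≤ _ := mul_le_mul_of_nonneg_left hl2 (by
        have := hnn.trans hpb
        have e : 16 / η = 2 * (8 / η) := by ring
        rw [e]; linarith)

lemma FF_eventually {V : ℝ → ℝ → ℝ} (hV : IsGraphon V) {ε : ℝ} (hε : 0 < ε) :
    ∀ᶠ m : ℕ in atTop, FF m V ≤ graphonEnt V + ε := by
  obtain ⟨η, hη, hη1, hη2⟩ : ∃ η : ℝ, 0 < η ∧ η ≤ 1 / 4 ∧ η ≤ ε / 64 :=
    ⟨min (1 / 4) (ε / 64), by positivity, min_le_left _ _, min_le_right _ _⟩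
  have hτ : 0 < η * ε / 64 := by positivity
  obtain ⟨g, hgs, hgd, hgc, hgi⟩ :=
    (hV.integrable (lam.prod lam)).exists_hasCompactSupport_integral_sub_le hτ
  have huc := hgs.uniformContinuous_of_continuous hgc
  obtain ⟨d, hd, hdg⟩ := Metric.uniformContinuous_iff.1 huc _ hτ
  have hlim : Tendsto (fun m : ℕ => 1 / ((m:ℝ) + 1)) atTop (nhds 0) :=
    tendsto_one_div_add_atTop_nhds_zero_nat
  have hmin : 0 < min d (min (η / 2) (η * ε / 64)) := by positivity
  filter_upwards [hlim.eventually (gt_mem_nhds hmin)] with m hm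
  have m1 := lt_of_lt_of_le hm (min_le_left _ _)
  have m2 := lt_of_lt_of_le hm ((min_le_right _ _).trans (min_le_left _ _))
  have m3 := lt_of_lt_of_le hm ((min_le_right _ _).trans (min_le_right _ _))
  have hle : 1 / (2 * (m:ℝ) + 2) ≤ 1 / ((m:ℝ) + 1) := by
    apply one_div_le_one_div_of_le (by positivity)
    have : (0:ℝ) ≤ m := Nat.cast_nonneg m
    linarith
  have key := FF_le_approx hη hη1 (hle.trans m2.le) hV hgi (τ := η * ε / 64) (fun p q hpq => by
    have := hdg (lt_of_le_of_lt hpq m1)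
    rw [Real.dist_eq] at this
    exact this.le)
  have hgd' : ∫ p, |V p.1 p.2 - g p| ∂(lam.prod lam) ≤ η * ε / 64 := hgd
  have : 16 / η * ((∫ p, |V p.1 p.2 - g p| ∂(lam.prod lam)) + η * ε / 64 + 1 / (2 * (m:ℝ) + 2)) ≤
      16 / η * (3 * (η * ε / 64)) := by
    apply mul_le_mul_of_nonneg_left _ (by positivity)
    linarith
  have e : 16 / η * (3 * (η * ε / 64)) = 3 * ε / 4 := by field_simp; norm_num
  linarith

lemma abs_setIntegral_le_L1 {U : ℝ × ℝ → ℝ} (hU : Integrable U (lam.prod lam)) {S T : Set ℝ}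
    (hS1 : S ⊆ Icc 0 1) (hT1 : T ⊆ Icc 0 1) :
    |∫ p in S ×ˢ T, U p| ≤ ∫ p, |U p| ∂(lam.prod lam) := by
  have hle : (volume : Measure (ℝ × ℝ)).restrict (S ×ˢ T) ≤ lam.prod lam := by
    unfold lam
    rw [Measure.prod_restrict]
    exact Measure.restrict_mono (Set.prod_mono hS1 hT1) le_rfl
  refine (abs_integral_le_integral_abs).trans ?_
  exact integral_mono_measure hle (ae_of_all _ fun _ => abs_nonneg _) hU.abs

lemma deltaCut_L1 {W W' W₀ : ℝ → ℝ → ℝ} (hW : IsGraphon W) (hW' : IsGraphon W')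
    (h₀ : IsGraphon W₀) :
    deltaCut W' W₀ ≤ deltaCut W W₀ + ∫ p, |W' p.1 p.2 - W p.1 p.2| ∂(lam.prod lam) := by
  rw [← sub_le_iff_le_add]
  refine le_csInf ⟨_, id, id, isMPSelf_id, isMPSelf_id, rfl⟩ ?_
  rintro _ ⟨σ₁, σ₂, h1, h2, rfl⟩
  rw [sub_le_iff_le_add]
  have hstep : deltaCut W' W₀ ≤
      cutNorm (fun x y => W' (σ₁ x) (σ₁ y) - W₀ (σ₂ x) (σ₂ y)) := by
    refine csInf_le ⟨0, ?_⟩ ⟨σ₁, σ₂, h1, h2, rfl⟩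
    rintro _ ⟨_, _, _, _, rfl⟩
    exact cutNorm_nonneg _
  refine hstep.trans ?_
  have hmp : MeasurePreserving (Prod.map σ₁ σ₁) (lam.prod lam) (lam.prod lam) := h1.1.prod h1.1
  have hint : ∫ p, |W' (σ₁ p.1) (σ₁ p.2) - W (σ₁ p.1) (σ₁ p.2)| ∂(lam.prod lam) =
      ∫ p, |W' p.1 p.2 - W p.1 p.2| ∂(lam.prod lam) := by
    have hm : Measurable (fun p : ℝ × ℝ => |W' p.1 p.2 - W p.1 p.2|) :=
      (hW'.meas.sub hW.meas).abs
    have := integral_map (μ := lam.prod lam) hmp.measurable.aemeasurable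
      (f := fun p : ℝ × ℝ => |W' p.1 p.2 - W p.1 p.2|) hm.aestronglyMeasurable
    rw [hmp.map_eq] at this
    exact this.symm
  rw [← hint]
  refine cutNorm_le _ fun S T hS hT hS1 hT1 => ?_
  have g1 := hW.comp h1
  have g1' := hW'.comp h1
  have g2 := h₀.comp h2
  have hfin : IsFiniteMeasure ((volume : Measure (ℝ × ℝ)).restrict (S ×ˢ T)) := by
    have hle : (volume : Measure (ℝ × ℝ)).restrict (S ×ˢ T) ≤ lam.prod lam := by
      unfold lam
      rw [Measure.prod_restrict]
      exact Measure.restrict_mono (Set.prod_mono hS1 hT1) le_rfl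
    have : IsFiniteMeasure (lam.prod lam) := inferInstance
    exact isFiniteMeasure_of_le _ hle
  have e : ∫ p in S ×ˢ T, (W' (σ₁ p.1) (σ₁ p.2) - W₀ (σ₂ p.1) (σ₂ p.2)) =
      (∫ p in S ×ˢ T, (W (σ₁ p.1) (σ₁ p.2) - W₀ (σ₂ p.1) (σ₂ p.2))) +
      ∫ p in S ×ˢ T, (W' (σ₁ p.1) (σ₁ p.2) - W (σ₁ p.1) (σ₁ p.2)) := by
    have := integral_add ((g1.integrable (volume.restrict (S ×ˢ T))).sub (g2.integrable _))
      ((g1'.integrable _).sub (g1.integrable _))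
    refine Eq.trans ?_ this
    congr 1; funext p
    simp only [Pi.add_apply, Pi.sub_apply]; ring
  rw [e]
  refine (abs_add_le _ _).trans (add_le_add ?_ ?_)
  · exact le_cutNorm (fun x y => W (σ₁ x) (σ₁ y) - W₀ (σ₂ x) (σ₂ y)) 1
      (fun x y => hW.sub_abs h₀ _ _ _ _) hS hT hS1 hT1
  · exact abs_setIntegral_le_L1 (U := fun p => W' (σ₁ p.1) (σ₁ p.2) - W (σ₁ p.1) (σ₁ p.2))
      ((g1'.integrable _).sub (g1.integrable _)) hS1 hT1

/-- Embedding of graphons in L1. -/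
def iotaL (W : Graphon) : Lp ℝ 1 (lam.prod lam) :=
  (W.2.integrable (lam.prod lam)).toL1 (fun p : ℝ × ℝ => W.1 p.1 p.2)

lemma dist_iotaL (W W' : Graphon) :
    dist (iotaL W) (iotaL W') = ∫ p, |W.1 p.1 p.2 - W'.1 p.1 p.2| ∂(lam.prod lam) := by
  rw [L1.dist_eq_integral_dist]
  refine integral_congr_ae ?_
  filter_upwards [(W.2.integrable (lam.prod lam)).coeFn_toL1,
    (W'.2.integrable (lam.prod lam)).coeFn_toL1] with p h h'
  change dist (((W.2.integrable (lam.prod lam)).toL1 _ : ℝ × ℝ → ℝ) p)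
    (((W'.2.integrable (lam.prod lam)).toL1 _ : ℝ × ℝ → ℝ) p) = _
  rw [h, h', Real.dist_eq]

/-- The L1 topology on graphons. -/
def topL1 : TopologicalSpace Graphon := TopologicalSpace.induced iotaL inferInstance

lemma cut_coarser (s : Set Graphon) (hs : IsOpen s) : @IsOpen _ topL1 s := by
  revert s
  change topL1 ≤ TopologicalSpace.generateFrom _
  refine le_generateFrom ?_
  rintro _ ⟨W₀, ε, hε, rfl⟩
  have hc : @Continuous _ _ topL1 _ iotaL := continuous_induced_dom
  refine (@isOpen_iff_mem_nhds _ topL1 _).2 ?_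
  intro W hW
  change deltaCut W.1 W₀.1 < ε at hW
  have hb : Metric.ball (iotaL W) (ε - deltaCut W.1 W₀.1) ∈ nhds (iotaL W) :=
    Metric.ball_mem_nhds _ (by linarith)
  have := @Continuous.continuousAt _ _ topL1 _ _ W hc
  filter_upwards [this hb] with W' h
  change deltaCut W'.1 W₀.1 < ε
  have h' : dist (iotaL W') (iotaL W) < ε - deltaCut W.1 W₀.1 := h
  rw [dist_iotaL] at h'
  linarith [deltaCut_L1 W.2 W'.2 W₀.2]

lemma ae_mem_measSupport (μ : Measure Graphon) : ∀ᵐ W ∂μ, W ∈ measSupport μ := by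
  have : Fact ((1 : ENNReal) ≠ ⊤) := ⟨ENNReal.one_ne_top⟩
  have hsc : @SecondCountableTopology Graphon topL1 :=
    TopologicalSpace.secondCountableTopology_induced _ _ iotaL
  let O : {s : Set Graphon // IsOpen s ∧ μ s = 0} → Set Graphon := fun s => s.1
  obtain ⟨T, hT, hU⟩ := @TopologicalSpace.isOpen_iUnion_countable Graphon topL1 hsc _ O
    (fun s => cut_coarser _ s.2.1)
  have hnull : μ (⋃ i, O i) = 0 := by
    rw [← hU]
    exact (measure_biUnion_null_iff hT).2 fun s _ => s.2.2
  rw [ae_iff]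
  refine measure_mono_null ?_ hnull
  intro W hW
  have hW' : ¬ ∀ s : Set Graphon, IsOpen s → W ∈ s → 0 < μ s := hW
  push Not at hW'
  obtain ⟨s, hs, hWs, h0⟩ := hW'
  exact mem_iUnion.2 ⟨⟨s, hs, le_antisymm h0 zero_le⟩, hWs⟩

lemma graphEntropy_nonneg {n : ℕ} (μ : Measure (SimpleGraph (Fin n))) [IsProbabilityMeasure μ] :
    0 ≤ graphEntropy μ := by
  refine Finset.sum_nonneg fun G _ => ?_
  have h1 : (μ {G}).toReal ≤ 1 := by
    have := ENNReal.toReal_mono ENNReal.one_ne_top (prob_le_one (μ := μ) (s := {G}))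
    simpa using this
  have h2 := Real.logb_nonpos (b := 2) (by norm_num) ENNReal.toReal_nonneg h1
  have h3 : 0 ≤ (μ {G}).toReal := ENNReal.toReal_nonneg
  nlinarith

lemma limsup_entropy_le (μn : ∀ n : ℕ, Measure (SimpleGraph (Fin n)))
    (hprob : ∀ n, IsProbabilityMeasure (μn n)) (m : ℕ) {I : ℝ}
    (hI : Tendsto (fun n => ∫ W : Graphon, FF m W.1 ∂((μn n).map graphonMap)) atTop (nhds I)) :
    limsup (fun n => graphEntropy (μn n) / choose2 n) atTop ≤ I := by
  set J : ℕ → ℝ := fun n => ∫ W : Graphon, FF m W.1 ∂((μn n).map graphonMap) with hJ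
  set L := Real.logb 2 ((m:ℝ) + 1)
  set c := Real.logb 2 ((((2 * (m:ℝ) + 1) ^ (m + 1)) ^ (m + 1)))
  let r : ℕ → ℝ := fun n => L * (2 * ((n:ℝ) - 1)⁻¹) + c * (2 * ((n:ℝ) - 1)⁻¹ * (n:ℝ)⁻¹) +
    (1 + ((n:ℝ) - 1)⁻¹) * J n
  have hx : Tendsto (fun n : ℕ => ((n:ℝ) - 1)⁻¹) atTop (nhds 0) :=
    tendsto_inv_atTop_zero.comp
      (tendsto_atTop_add_const_right _ (-1) tendsto_natCast_atTop_atTop)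
  have hy : Tendsto (fun n : ℕ => (n:ℝ)⁻¹) atTop (nhds 0) :=
    tendsto_inv_atTop_zero.comp tendsto_natCast_atTop_atTop
  have hr : Tendsto r atTop (nhds I) := by
    have h1 := ((hx.const_mul 2).const_mul L).add (((hx.const_mul 2).mul hy).const_mul c)
    have h2 := h1.add ((hx.const_add 1).mul hI)
    simpa using h2
  have hle : (fun n => graphEntropy (μn n) / choose2 n) ≤ᶠ[atTop] r := by
    filter_upwards [eventually_ge_atTop 2] with n hn
    have hn' : (2:ℝ) ≤ n := by exact_mod_cast hn
    have h0 : (0:ℝ) < n - 1 := by linarith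
    have hc : 0 < choose2 n := by unfold choose2; positivity
    have := hprob n
    have hb := entropy_bound m (μn n)
    rw [div_le_iff₀ hc]
    refine hb.trans (le_of_eq ?_)
    change (n:ℝ) * L + c + (n:ℝ) ^ 2 / 2 * J n = r n * choose2 n
    simp only [r]
    unfold choose2
    have : (n:ℝ) ≠ 0 := by linarith
    field_simp
    ring
  have hnn : ∀ n : ℕ, 0 ≤ graphEntropy (μn n) / choose2 n := by
    intro n
    have := hprob n
    refine div_nonneg (graphEntropy_nonneg _) ?_
    unfold choose2
    rcases Nat.eq_zero_or_pos n with h | h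
    · subst h; simp
    · have : (1:ℝ) ≤ n := by exact_mod_cast h
      have h0 : (0:ℝ) ≤ n - 1 := by linarith
      positivity
  rw [← hr.limsup_eq]
  refine limsup_le_limsup hle ?_ hr.isBoundedUnder_le
  exact (isBoundedUnder_of ⟨0, hnn⟩ : IsBoundedUnder (· ≥ ·) atTop _).isCoboundedUnder_le

/-- Theorem 1.8: if the distributions of the random graphons `W_{G_n}`
converge weakly to `μ`, then `limsup_n H(G_n)/C(n,2) ≤ sup_{W ∈ supp(μ)} Ent(W)`. -/
theorem stmt13 (μn : ∀ n : ℕ, Measure (SimpleGraph (Fin n)))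
    (hprob : ∀ n, IsProbabilityMeasure (μn n))
    (μ : Measure Graphon) (hμ : IsProbabilityMeasure μ)
    (hconv : ∀ f : Graphon → ℝ, Continuous f → (∃ C : ℝ, ∀ W, |f W| ≤ C) →
      Filter.Tendsto (fun n => ∫ W, f W ∂((μn n).map graphonMap)) Filter.atTop
        (nhds (∫ W, f W ∂μ))) :
    Filter.limsup (fun n => graphEntropy (μn n) / choose2 n) Filter.atTop ≤
      sSup ((fun W : Graphon => graphonEnt W.1) '' measSupport μ) := by
  set s := sSup ((fun W : Graphon => graphonEnt W.1) '' measSupport μ) with hs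
  have hbdd : BddAbove ((fun W : Graphon => graphonEnt W.1) '' measSupport μ) := by
    refine ⟨1, ?_⟩
    rintro _ ⟨W, _, rfl⟩
    exact graphonEnt_le_one W.2
  have habs : ∀ m (W : Graphon), |FF m W.1| ≤ 1 := fun m W => by
    rw [abs_of_nonneg (FF_nonneg m W.2)]; exact FF_le_one m W.2
  have hFi : ∀ m, Integrable (fun W : Graphon => FF m W.1) μ := fun m =>
    Integrable.of_bound (FF_continuous m).measurable.aestronglyMeasurable 1
      (ae_of_all _ (habs m))
  have step1 : ∀ m : ℕ, Filter.limsup (fun n => graphEntropy (μn n) / choose2 n) Filter.atTop ≤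
      ∫ W, FF m W.1 ∂μ := fun m =>
    limsup_entropy_le μn hprob m (hconv _ (FF_continuous m) ⟨1, habs m⟩)
  have hle : ∀ m : ℕ, ∫ W, FF m W.1 ∂μ ≤ ∫ W : Graphon, max (FF m W.1) s ∂μ := fun m =>
    integral_mono (hFi m) ((hFi m).sup (integrable_const s)) fun W => le_max_left _ _
  have htend : Tendsto (fun m : ℕ => ∫ W : Graphon, max (FF m W.1) s ∂μ) atTop
      (nhds (∫ _ : Graphon, s ∂μ)) := by
    refine tendsto_integral_of_dominated_convergence (fun _ => 1 + |s|) ?_ (integrable_const _) ?_ ?_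
    · exact fun m => ((hFi m).sup (integrable_const s)).aestronglyMeasurable
    · refine fun m => ae_of_all _ fun W => ?_
      have h1 := habs m W
      rw [Real.norm_eq_abs]
      refine abs_max_le_max_abs_abs.trans (max_le ?_ ?_)
      · linarith [abs_nonneg s]
      · linarith
    · filter_upwards [ae_mem_measSupport μ] with W hW
      have hWs : graphonEnt W.1 ≤ s := le_csSup hbdd ⟨W, hW, rfl⟩
      rw [Metric.tendsto_nhds]
      intro ε hε
      filter_upwards [FF_eventually W.2 (half_pos hε)] with m hm
      rw [Real.dist_eq, abs_of_nonneg (sub_nonneg.2 (le_max_right _ _)), sub_lt_iff_lt_add']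
      exact max_lt (by linarith) (by linarith)
  have hconst : ∫ _ : Graphon, s ∂μ = s := by simp
  rw [hconst] at htend
  exact ge_of_tendsto' htend fun m => (step1 m).trans (hle m)

end
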